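/- arXiv:2409.02025 — 6 statements merged into one kernel-verified Lean document; each statement's English description precedes it below -/
import Mathlib

section
/- For every r ≥ 0, α ≥ 0 and T ∈ ℝ there exists a unique function u : (−∞, T] × Ω^Q → ℝ such that for every q ∈ Ω^Q the map t ↦ u(t, q) is continuously differentiable on (−∞, T], u satisfies 0 = ∂_t u(t, q) − r u(t, q) + H(q, u(t, q−1) − u(t, q), u(t, q+1) − u(t, q)) for all t ≤ T and all q ∈ Ω^Q, and u(T, q) = −α q² for all q ∈ Ω^Q. -/
/-!
In reversed time `s = T - t` the system is the autonomous ODE `x' = F x` on the finite-dimensional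
space of functions on `{qlow, …, qhigh}`, where `F` (`hjbField`) is smooth.  Uniqueness is
Picard–Lindelöf uniqueness on a ball containing both solutions over a compact time interval.

Since `F` grows exponentially, global existence needs an a priori bound.  If all coordinates of `y`
lie in `[-g, g]` and `y q = g`, both increments entering the Hamiltonian are nonpositive, so
`F y q ≤ lp / kp + lm / km`; if `y q = -g`, then `F y q ≥ -phi q²`.  Hence with
`g s = A + C |s|`, for `C` at least these two rates and `A` at least the initial size, the region
`|x q| ≤ g s` should be invariant.  This is exploited by truncation: the time-dependent field
`F (clamp (g s) x)` is bounded and Lipschitz in `x`, uniformly for `s` in compact sets, so it has a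
global integral curve (`exists_global_curve`).  For the truncated field each coordinate can be
treated separately: when `x q` exceeds `g s`, its clamped value is exactly `g s`, so the estimate
above shows that `x q - g s` does not increase (`nonpos_of_deriv_nonpos_of_pos`).  The curve thus
never leaves the region where truncation is inactive, and so it solves the original system.
-/

/-- The optimised Hamiltonian of the ergodic Avellaneda–Stoikov model. -/
noncomputable def Hopt (qlow qhigh : ℤ) (lp lm kp km phi : ℝ) (q : ℤ) (p1 p2 : ℝ) : ℝ :=
  (if qlow < q then (lp / kp) * Real.exp (kp * p1 - 1) else 0)
    + (if q < qhigh then (lm / km) * Real.exp (km * p2 - 1) else 0)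
    - phi * (q : ℝ) ^ 2

/-- `u` is a solution of the discounted finite-horizon HJB system on `(-∞, T]` with
discount factor `r` and terminal penalty `G(q) = -α q²`. -/
def IsFHSol (qlow qhigh : ℤ) (lp lm kp km phi : ℝ) (r alpha T : ℝ)
    (u : ℝ → ℤ → ℝ) : Prop :=
  ∀ q ∈ Finset.Icc qlow qhigh,
    ContDiffOn ℝ 1 (fun t => u t q) (Set.Iic T) ∧
    (∀ t ≤ T,
      0 = derivWithin (fun s => u s q) (Set.Iic T) t - r * u t q
        + Hopt qlow qhigh lp lm kp km phi q (u t (q - 1) - u t q) (u t (q + 1) - u t q)) ∧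
    u T q = -alpha * (q : ℝ) ^ 2

open Set

/-! ### Global integral curves and a scalar barrier -/

/-- A time-dependent vector field which is bounded and Lipschitz in space, uniformly over compact
time intervals, has an integral curve defined on all of `ℝ`: the solutions on `[-S, S]` given by
Picard–Lindelöf agree on overlaps. -/
theorem exists_global_curve {E : Type*} [NormedAddCommGroup E] [NormedSpace ℝ E] [CompleteSpace E]
    (G : ℝ → E → E) (x₀ : E) (hcont : ∀ x, Continuous fun t => G t x)
    (hG : ∀ S : ℝ, 0 < S → ∃ K L : NNReal, ∀ t ∈ Icc (-S) S,
      LipschitzWith K (G t) ∧ ∀ x, ‖G t x‖ ≤ L) :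
    ∃ x : ℝ → E, x 0 = x₀ ∧ ∀ t, HasDerivAt x (G t (x t)) t := by
  have hloc : ∀ S : ℝ, 0 < S → ∃ x : ℝ → E, x 0 = x₀ ∧
      ∀ t ∈ Ioo (-S) S, HasDerivAt x (G t (x t)) t := by
    intro S hS
    obtain ⟨K, L, h⟩ := hG S hS
    have hPL : IsPicardLindelof G (tmin := -S) (tmax := S) ⟨0, by constructor <;> linarith⟩ x₀
        (L * S.toNNReal) 0 L K := by
      refine ⟨fun t ht => (h t ht).1.lipschitzOnWith, fun x _ => (hcont x).continuousOn,
        fun t ht x _ => (h t ht).2 x, ?_⟩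
      simp [hS.le]
    obtain ⟨x, hx0, hx⟩ := hPL.exists_eq_forall_mem_Icc_hasDerivWithinAt₀
    exact ⟨x, hx0, fun t ht => (hx t (Ioo_subset_Icc_self ht)).hasDerivAt (Icc_mem_nhds ht.1 ht.2)⟩
  choose! X hX0 hX using hloc
  have hagree : ∀ S S' : ℝ, 0 < S → S ≤ S' → EqOn (X S) (X S') (Ioo (-S) S) := by
    intro S S' hS hSS'
    obtain ⟨K, L, h⟩ := hG S hS
    refine ODE_solution_unique_of_mem_Ioo (v := G) (s := fun _ => univ) (K := K) (t₀ := 0)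
      (fun t ht => (h t (Ioo_subset_Icc_self ht)).1.lipschitzOnWith)
      ⟨by linarith, hS⟩ (fun t ht => ⟨hX S hS t ht, mem_univ _⟩)
      (fun t ht => ⟨hX S' (hS.trans_le hSS') t ⟨by linarith [ht.1], by linarith [ht.2]⟩,
        mem_univ _⟩) ?_
    rw [hX0 S hS, hX0 S' (hS.trans_le hSS')]
  refine ⟨fun t => X (|t| + 1) t, hX0 _ (by simp), fun t => ?_⟩
  have hpos : 0 < |t| + 2 := by positivity
  -- Near `t` the glued curve coincides with the solution on the larger interval of radius `|t| + 2`.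
  have heq : ∀ s ∈ Ioo (t - 1) (t + 1), X (|s| + 1) s = X (|t| + 2) s := by
    intro s hs
    have hst : |s| ≤ |t| + 1 := by
      have h1 : |s - t| < 1 := abs_lt.2 ⟨by linarith [hs.1], by linarith [hs.2]⟩
      have h2 := abs_sub_abs_le_abs_sub s t
      linarith
    exact hagree _ _ (by positivity) (by linarith) ⟨by linarith [neg_abs_le s],
      by linarith [le_abs_self s]⟩
  have hd := hX (|t| + 2) hpos t ⟨by linarith [neg_abs_le t], by linarith [le_abs_self t]⟩
  have ht : t ∈ Ioo (t - 1) (t + 1) := ⟨by linarith, by linarith⟩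
  simp only [heq t ht]
  exact hd.congr_of_eventuallyEq (Filter.eventually_of_mem (Ioo_mem_nhds ht.1 ht.2) heq)

theorem nonpos_of_deriv_nonpos_of_pos {f f' : ℝ → ℝ} (hf : ∀ s, HasDerivAt f (f' s) s)
    (h0 : f 0 ≤ 0) (h : ∀ s, 0 ≤ s → 0 < f s → f' s ≤ 0) {s : ℝ} (hs : 0 ≤ s) : f s ≤ 0 := by
  -- The strict barriers `ε (1 + s)` cannot be crossed; then `ε → 0`.
  have key : ∀ ε : ℝ, 0 < ε → f s ≤ ε * (1 + s) := by
    intro ε hε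
    refine image_le_of_deriv_right_lt_deriv_boundary (a := 0) (b := s) (f' := f')
      (B := fun s => ε * (1 + s)) (B' := fun _ => ε)
      (fun x _ => (hf x).continuousAt.continuousWithinAt)
      (fun x _ => (hf x).hasDerivWithinAt) (by simp; linarith) (fun x => ?_) (fun x hx hfx => ?_)
      ⟨hs, le_rfl⟩
    · simpa using ((hasDerivAt_id x).const_add 1).const_mul ε
    · have : 0 < f x := by
        rw [hfx]
        have := hx.1
        positivity
      linarith [h x hx.1 this]
  refine le_of_forall_pos_le_add fun δ hδ => ?_
  have := key (δ / (1 + s)) (by positivity)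
  rwa [div_mul_cancel₀ _ (by positivity), ← zero_add δ] at this

/-! ### The time-reversed vector field and its truncation -/

/-- Extension by zero of a function on `{a, …, b}` to `ℤ`. -/
noncomputable def extZ {a b : ℤ} (x : Finset.Icc a b → ℝ) (q : ℤ) : ℝ :=
  if h : q ∈ Finset.Icc a b then x ⟨q, h⟩ else 0

theorem extZ_of_mem {a b : ℤ} (x : Finset.Icc a b → ℝ) {q : ℤ} (h : q ∈ Finset.Icc a b) :
    extZ x q = x ⟨q, h⟩ := by simp only [extZ, h, dite_true]

/-- The vector field of the HJB system in reversed time `s = T - t`.  The values of `extZ x` outside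
`{a, …, b}` are irrelevant because of the indicators in `Hopt`. -/
noncomputable def hjbField (a b : ℤ) (lp lm kp km phi r : ℝ) (x : Finset.Icc a b → ℝ) :
    Finset.Icc a b → ℝ := fun q =>
  -(r * x q) + Hopt a b lp lm kp km phi q (extZ x (q - 1) - x q) (extZ x (q + 1) - x q)

theorem contDiff_extZ {a b : ℤ} (q : ℤ) :
    ContDiff ℝ 1 (fun x : Finset.Icc a b → ℝ => extZ x q) := by
  unfold extZ
  split_ifs <;> fun_prop

theorem contDiff_hjbField (a b : ℤ) (lp lm kp km phi r : ℝ) :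
    ContDiff ℝ 1 (hjbField a b lp lm kp km phi r) := by
  refine contDiff_pi.2 fun q => ?_
  have h1 := contDiff_extZ (a := a) (b := b) ((q : ℤ) - 1)
  have h2 := contDiff_extZ (a := a) (b := b) ((q : ℤ) + 1)
  unfold hjbField Hopt
  split_ifs <;> fun_prop

/-- Coordinatewise truncation to `[-g, g]`. -/
def clampFun {ι : Type*} (g : ℝ) (x : ι → ℝ) : ι → ℝ := fun i => max (-g) (min g (x i))

theorem abs_clampFun_le {ι : Type*} {g : ℝ} (hg : 0 ≤ g) (x : ι → ℝ) (i : ι) :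
    |clampFun g x i| ≤ g :=
  abs_le.2 ⟨le_max_left _ _, max_le (by linarith) (min_le_left _ _)⟩

theorem lipschitzWith_clampFun {ι : Type*} [Fintype ι] (g : ℝ) :
    LipschitzWith 1 (clampFun (ι := ι) g) := by
  refine LipschitzWith.of_dist_le_mul fun x y => ?_
  rw [NNReal.coe_one, one_mul]
  refine (dist_pi_le_iff dist_nonneg).2 fun i => le_trans ?_ (dist_le_pi_dist x y i)
  have h := ((LipschitzWith.id (α := ℝ)).const_min g).const_max (-g)
  simpa [clampFun] using h.dist_le_mul (x i) (y i)

/-! ### A priori bounds and global existence -/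

section Bounds

variable {a b : ℤ} {lp lm kp km phi r : ℝ}

theorem sq_le_of_mem_Icc {q : ℤ} (hq : q ∈ Finset.Icc a b) :
    (q : ℝ) ^ 2 ≤ (a : ℝ) ^ 2 + (b : ℝ) ^ 2 := by
  obtain ⟨h1, h2⟩ := Finset.mem_Icc.1 hq
  have h1' : (a : ℝ) ≤ q := by exact_mod_cast h1
  have h2' : (q : ℝ) ≤ b := by exact_mod_cast h2
  rcases le_total 0 (q : ℝ) with h | h
  · nlinarith [sq_nonneg (a : ℝ)]
  · nlinarith [sq_nonneg (b : ℝ)]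

theorem extZ_le {g : ℝ} (hg : 0 ≤ g) {y : Finset.Icc a b → ℝ} (hy : ∀ i, |y i| ≤ g) (q : ℤ) :
    extZ y q ≤ g := by
  unfold extZ
  split_ifs
  · exact (le_abs_self _).trans (hy _)
  · exact hg

theorem hjbField_le (hlp : 0 < lp) (hlm : 0 < lm) (hkp : 0 < kp) (hkm : 0 < km)
    (hphi : 0 ≤ phi) (hr : 0 ≤ r) {g : ℝ} (hg : 0 ≤ g) {y : Finset.Icc a b → ℝ}
    (hy : ∀ i, |y i| ≤ g) (q : Finset.Icc a b) (hq : y q = g) :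
    hjbField a b lp lm kp km phi r y q ≤ lp / kp + lm / km := by
  have e : ∀ l k p : ℝ, 0 < l → 0 < k → p ≤ 0 → (l / k) * Real.exp (k * p - 1) ≤ l / k := by
    intro l k p hl hk hp
    refine mul_le_of_le_one_right (by positivity) (Real.exp_le_one_iff.2 ?_)
    nlinarith
  have e1 := e lp kp (extZ y ((q : ℤ) - 1) - y q) hlp hkp (by rw [hq]; linarith [extZ_le hg hy (q - 1)])
  have e2 := e lm km (extZ y ((q : ℤ) + 1) - y q) hlm hkm (by rw [hq]; linarith [extZ_le hg hy (q + 1)])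
  have p1 : 0 < lp / kp := by positivity
  have p2 : 0 < lm / km := by positivity
  have p3 : 0 ≤ phi * ((q : ℤ) : ℝ) ^ 2 := by positivity
  have p4 : 0 ≤ r * y q := by rw [hq]; positivity
  unfold hjbField Hopt
  split_ifs <;> linarith

theorem le_hjbField (hlp : 0 < lp) (hlm : 0 < lm) (hkp : 0 < kp) (hkm : 0 < km)
    (hphi : 0 ≤ phi) (hr : 0 ≤ r) {g : ℝ} (hg : 0 ≤ g) {y : Finset.Icc a b → ℝ}
    (q : Finset.Icc a b) (hq : y q = -g) :
    -(phi * ((a : ℝ) ^ 2 + (b : ℝ) ^ 2)) ≤ hjbField a b lp lm kp km phi r y q := by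
  have p1 : 0 < lp / kp * Real.exp (kp * (extZ y ((q : ℤ) - 1) - y q) - 1) := by positivity
  have p2 : 0 < lm / km * Real.exp (km * (extZ y ((q : ℤ) + 1) - y q) - 1) := by positivity
  have p3 := mul_le_mul_of_nonneg_left (sq_le_of_mem_Icc q.2) hphi
  have p4 : 0 ≤ -(r * y q) := by
    rw [hq]
    have : 0 ≤ r * g := by positivity
    linarith
  unfold hjbField Hopt
  split_ifs <;> linarith

/-- Global forward solvability of `x' = F x`, by truncation at the level `A + C |s|`. -/
theorem exists_forward_solution (hlp : 0 < lp) (hlm : 0 < lm) (hkp : 0 < kp) (hkm : 0 < km)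
    (hphi : 0 ≤ phi) (hr : 0 ≤ r) (x₀ : Finset.Icc a b → ℝ) :
    ∃ x : ℝ → Finset.Icc a b → ℝ, x 0 = x₀ ∧ Differentiable ℝ x ∧
      ∀ s, 0 ≤ s → HasDerivAt x (hjbField a b lp lm kp km phi r (x s)) s := by
  set F := hjbField a b lp lm kp km phi r with hF
  set A : ℝ := ‖x₀‖ with hA
  set C : ℝ := lp / kp + lm / km + phi * ((a : ℝ) ^ 2 + (b : ℝ) ^ 2) with hC
  have c1 : 0 < lp / kp + lm / km := by positivity
  have c2 : 0 ≤ phi * ((a : ℝ) ^ 2 + (b : ℝ) ^ 2) := by positivity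
  have hA0 : 0 ≤ A := norm_nonneg _
  have hC0 : 0 ≤ C := by linarith
  have hg : ∀ s : ℝ, 0 ≤ A + C * |s| := fun s => by positivity
  have hFc : ContDiff ℝ 1 F := contDiff_hjbField a b lp lm kp km phi r
  obtain ⟨x, hx0, hx⟩ := exists_global_curve (fun s x => F (clampFun (A + C * |s|) x)) x₀
    (fun x => by
      refine hFc.continuous.comp (continuous_pi fun i => ?_)
      unfold clampFun
      fun_prop)
    (by
      intro S hS
      have hcpt := isCompact_closedBall (0 : Finset.Icc a b → ℝ) (A + C * S)
      obtain ⟨K, hK⟩ := hFc.contDiffOn.exists_lipschitzOnWith one_ne_zero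
        (convex_closedBall (0 : Finset.Icc a b → ℝ) (A + C * S)) hcpt
      obtain ⟨L, hL⟩ := hcpt.exists_bound_of_continuousOn hFc.continuous.continuousOn
      have hmem : ∀ t ∈ Icc (-S) S, ∀ x : Finset.Icc a b → ℝ,
          clampFun (A + C * |t|) x ∈ Metric.closedBall (0 : Finset.Icc a b → ℝ) (A + C * S) := by
        intro t ht x
        have hle : A + C * |t| ≤ A + C * S := by
          have := mul_le_mul_of_nonneg_left (abs_le.2 ht) hC0
          linarith
        rw [mem_closedBall_zero_iff, pi_norm_le_iff_of_nonneg ((hg t).trans hle)]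
        exact fun i => (abs_clampFun_le (hg t) x i).trans hle
      refine ⟨K, L.toNNReal, fun t ht => ⟨?_, fun x => ?_⟩⟩
      · have := hK.comp (lipschitzWith_clampFun (A + C * |t|)).lipschitzOnWith
          (fun x _ => hmem t ht x : MapsTo _ univ _)
        simpa [lipschitzOnWith_univ, Function.comp_def] using this
      · exact (hL _ (hmem t ht x)).trans (Real.le_coe_toNNReal L))
  have hxq : ∀ (q : Finset.Icc a b) s,
      HasDerivAt (fun s => x s q) (F (clampFun (A + C * |s|) (x s)) q) s :=
    fun q s => hasDerivAt_pi.1 (hx s) q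
  have hlin : ∀ s : ℝ, HasDerivAt (fun s => A + C * s) C s := fun s => by
    simpa using ((hasDerivAt_id s).const_mul C).const_add A
  have hx0q : ∀ q, |x 0 q| ≤ A := fun q => by
    rw [hx0]
    exact norm_le_pi_norm x₀ q
  have hupper : ∀ q s, 0 ≤ s → x s q ≤ A + C * s := by
    intro q s hs
    refine sub_nonpos.1 (nonpos_of_deriv_nonpos_of_pos (fun s => (hxq q s).sub (hlin s)) ?_ ?_ hs)
    · simpa using (le_abs_self _).trans (hx0q q)
    · intro s hs hpos
      have hpos' : A + C * |s| < x s q := by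
        rw [abs_of_nonneg hs]
        simpa using hpos
      have hcl : clampFun (A + C * |s|) (x s) q = A + C * |s| := by
        unfold clampFun
        rw [min_eq_left hpos'.le, max_eq_right (by linarith [hg s])]
      have := hjbField_le hlp hlm hkp hkm hphi hr (hg s) (abs_clampFun_le (hg s) (x s)) q hcl
      linarith
  have hlower : ∀ q s, 0 ≤ s → -(A + C * s) ≤ x s q := by
    intro q s hs
    have := nonpos_of_deriv_nonpos_of_pos (fun s => ((hlin s).add (hxq q s)).neg) ?_ ?_ hs
    · simp at this
      linarith
    · have := neg_abs_le (x 0 q)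
      simp
      linarith [hx0q q]
    · intro s hs hpos
      have hpos' : x s q < -(A + C * |s|) := by
        rw [abs_of_nonneg hs]
        simp at hpos
        linarith
      have hcl : clampFun (A + C * |s|) (x s) q = -(A + C * |s|) := by
        unfold clampFun
        rw [min_eq_right (by linarith [hg s]), max_eq_left hpos'.le]
      have := le_hjbField hlp hlm hkp hkm hphi hr (hg s) q hcl
      linarith
  refine ⟨x, hx0, fun s => (hx s).differentiableAt, fun s hs => ?_⟩
  have hcl : clampFun (A + C * |s|) (x s) = x s := by
    funext q
    unfold clampFun
    rw [abs_of_nonneg hs, min_eq_right (hupper q s hs), max_eq_right (hlower q s hs)]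
  have := hx s
  rwa [hcl] at this

end Bounds

/-! ### Uniqueness -/

/-- A solution of the HJB system, restricted to `{qlow, …, qhigh}`, is an integral curve of the
time-reversed field run backwards. -/
theorem IsFHSol.hasDerivWithinAt {qlow qhigh : ℤ} {lp lm kp km phi r alpha T : ℝ}
    {v : ℝ → ℤ → ℝ} (hv : IsFHSol qlow qhigh lp lm kp km phi r alpha T v) {t : ℝ} (ht : t ≤ T) :
    HasDerivWithinAt (fun s (q : Finset.Icc qlow qhigh) => v s q)
      (-hjbField qlow qhigh lp lm kp km phi r (fun q => v t q)) (Iic T) t := by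
  refine hasDerivWithinAt_pi.2 fun q => ?_
  obtain ⟨hc, hode, -⟩ := hv q q.2
  have hd := ((hc.differentiableOn one_ne_zero) t ht).hasDerivWithinAt
  convert hd using 1
  have h := hode t ht
  have hq := Finset.mem_Icc.1 q.2
  -- Outside `{qlow, …, qhigh}` the extension by zero may differ from `v`, but there the
  -- indicator kills the corresponding exponential.
  have hH : Hopt qlow qhigh lp lm kp km phi q
      (extZ (fun q : Finset.Icc qlow qhigh => v t q) (q - 1) - v t q)
      (extZ (fun q : Finset.Icc qlow qhigh => v t q) (q + 1) - v t q) =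
      Hopt qlow qhigh lp lm kp km phi q (v t (q - 1) - v t q) (v t (q + 1) - v t q) := by
    unfold Hopt
    congr 2
    · split_ifs with hlt
      · rw [extZ_of_mem _ (Finset.mem_Icc.2 ⟨by lia, by lia⟩)]
      · rfl
    · split_ifs with hlt
      · rw [extZ_of_mem _ (Finset.mem_Icc.2 ⟨by lia, by lia⟩)]
      · rfl
  simp only [Pi.neg_apply, hjbField]
  rw [hH]
  linarith

theorem IsFHSol.eq_of_le {qlow qhigh : ℤ} {lp lm kp km phi r alpha T : ℝ}
    {u v : ℝ → ℤ → ℝ} (hu : IsFHSol qlow qhigh lp lm kp km phi r alpha T u)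
    (hv : IsFHSol qlow qhigh lp lm kp km phi r alpha T v) {t : ℝ} (ht : t ≤ T) {q : ℤ}
    (hq : q ∈ Finset.Icc qlow qhigh) : v t q = u t q := by
  have hcont : ∀ {w : ℝ → ℤ → ℝ}, IsFHSol qlow qhigh lp lm kp km phi r alpha T w →
      ContinuousOn (fun s (q : Finset.Icc qlow qhigh) => w s q) (Icc t T) := fun hw s hs =>
    (hw.hasDerivWithinAt hs.2).continuousWithinAt.mono Icc_subset_Iic_self
  obtain ⟨R, hR⟩ := isCompact_Icc.exists_bound_of_continuousOn (hcont hu)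
  obtain ⟨R', hR'⟩ := isCompact_Icc.exists_bound_of_continuousOn (hcont hv)
  obtain ⟨K, hK⟩ := (contDiff_hjbField qlow qhigh lp lm kp km phi r).neg.contDiffOn
    |>.exists_lipschitzOnWith one_ne_zero
      (convex_closedBall (0 : Finset.Icc qlow qhigh → ℝ) (max R R')) (isCompact_closedBall _ _)
  have h := ODE_solution_unique_of_mem_Icc_left (a := t) (b := T) (K := K)
    (v := fun _ x => -hjbField qlow qhigh lp lm kp km phi r x)
    (s := fun _ => Metric.closedBall 0 (max R R'))
    (fun _ _ => hK) (hcont hv)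
    (fun s hs => (hv.hasDerivWithinAt hs.2).mono (Iic_subset_Iic.2 hs.2))
    (fun s hs => mem_closedBall_zero_iff.2
      ((hR' s (Ioc_subset_Icc_self hs)).trans (le_max_right _ _)))
    (hcont hu)
    (fun s hs => (hu.hasDerivWithinAt hs.2).mono (Iic_subset_Iic.2 hs.2))
    (fun s hs => mem_closedBall_zero_iff.2
      ((hR s (Ioc_subset_Icc_self hs)).trans (le_max_left _ _)))
    (by
      funext q
      rw [(hu q q.2).2.2, (hv q q.2).2.2])
  exact congrFun (h ⟨le_rfl, ht⟩) ⟨q, hq⟩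

/-! ### Existence and uniqueness in the original time -/

theorem stmt1 (qlow qhigh : ℤ) (hlow : qlow < 0) (hhigh : 0 < qhigh)
    (lp lm kp km phi : ℝ) (hlp : 0 < lp) (hlm : 0 < lm) (hkp : 0 < kp) (hkm : 0 < km)
    (hphi : 0 ≤ phi) (r alpha T : ℝ) (hr : 0 ≤ r) (halpha : 0 ≤ alpha) :
    ∃ u : ℝ → ℤ → ℝ,
      IsFHSol qlow qhigh lp lm kp km phi r alpha T u ∧
      ∀ v : ℝ → ℤ → ℝ, IsFHSol qlow qhigh lp lm kp km phi r alpha T v →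
        ∀ t ≤ T, ∀ q ∈ Finset.Icc qlow qhigh, v t q = u t q := by
  obtain ⟨x, hx0, hxd, hx⟩ := exists_forward_solution (a := qlow) (b := qhigh) hlp hlm hkp hkm
    hphi hr (fun q => -alpha * ((q : ℤ) : ℝ) ^ 2)
  have hsol : IsFHSol qlow qhigh lp lm kp km phi r alpha T (fun t q => extZ (x (T - t)) q) := by
    intro q hq
    simp only [extZ_of_mem _ hq]
    have hder : ∀ t ≤ T, HasDerivWithinAt (fun t => x (T - t) ⟨q, hq⟩)
        (-hjbField qlow qhigh lp lm kp km phi r (x (T - t)) ⟨q, hq⟩) (Iic T) t := by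
      intro t ht
      have h1 := hasDerivAt_pi.1 (hx (T - t) (by linarith)) ⟨q, hq⟩
      have h2 := h1.comp_const_sub T t
      exact h2.hasDerivWithinAt
    have hdw : ∀ t ≤ T, derivWithin (fun t => x (T - t) ⟨q, hq⟩) (Iic T) t =
        -hjbField qlow qhigh lp lm kp km phi r (x (T - t)) ⟨q, hq⟩ := fun t ht =>
      (hder t ht).derivWithin (uniqueDiffOn_Iic T t ht)
    refine ⟨?_, fun t ht => ?_, ?_⟩
    · refine (contDiffOn_one_iff_derivWithin (uniqueDiffOn_Iic T)).2
        ⟨fun t ht => (hder t ht).differentiableWithinAt, ?_⟩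
      refine ContinuousOn.congr (Continuous.continuousOn ?_) hdw
      have hFc := (contDiff_hjbField qlow qhigh lp lm kp km phi r).continuous
      have hxc := hxd.continuous
      exact ((continuous_apply _).comp (hFc.comp (hxc.comp (continuous_const.sub continuous_id)))).neg
    · rw [hdw t ht]
      simp only [hjbField]
      ring
    · simp [hx0]
  exact ⟨_, hsol, fun v hv t ht q hq => hsol.eq_of_le hv ht hq⟩
end

section
/- Let r > 0 and α ≥ 0. The stationary discounted HJB system 0 = −r u(q) + H(q, u(q−1) − u(q), u(q+1) − u(q)), q ∈ Ω^Q, admits a unique solution u_r : Ω^Q → ℝ. Moreover, if u(·, ·; T) denotes the unique solution on (−∞, T] of the finite-horizon HJB system 0 = ∂_t u − r u + H(q, u(t, q−1) − u(t, q), u(t, q+1) − u(t, q)) with terminal condition u(T, q; T) = −α q², then for every fixed t ∈ ℝ and every q ∈ Ω^Q the limit lim_{T → +∞} u(t, q; T) exists, is independent of t, and equals u_r(q). -/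
/-!
The Hamiltonian is nondecreasing in both momenta, so `q ↦ r u(q) - H(q, ·, ·)` obeys a discrete
comparison principle; everything follows from it.

* Uniqueness (`statSol_le`): at a point `q` where `w - v` is maximal, the increments of `w` are at
  most those of `v`, hence `r w(q) ≤ r v(q)`.
* Existence (`exists_statSol`): constants `cL ≤ 0 ≤ cU` serve as sub- and supersolution. For given
  neighbouring values in `[cL, cU]`, the scalar equation `r x = H(q, a - x, b - x)` has a unique
  root in `[cL, cU]`, and this root is monotone in `(a, b)`. The map sending a function to these
  roots is therefore a monotone self-map of the complete lattice `ℤ → [cL, cU]`, and a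
  Knaster–Tarski fixed point is a stationary solution.
* Convergence (`fhSol_abs_le`): for a stationary solution `w` and a finite-horizon solution `u`, the
  function `d(t, q) = e^{r (T - t)} (u(t, q) - w(q))` has time derivative
  `e^{r (T - t)} (H(w) - H(u))`, which is `≥ 0` at spatial maxima and `≤ 0` at spatial minima. By a
  maximum principle (`max_principle`) `d` is bounded by its terminal values, which do not depend
  on `T`, so `|u(t, q) - w(q)| ≤ M e^{-r (T - t)}`.
-/

open Filter

/-- `w` solves the stationary discounted HJB system with discount factor `r`. -/
def IsStatSol (qlow qhigh : ℤ) (lp lm kp km phi : ℝ) (r : ℝ) (w : ℤ → ℝ) : Prop :=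
  ∀ q ∈ Finset.Icc qlow qhigh,
    0 = -r * w q + Hopt qlow qhigh lp lm kp km phi q (w (q - 1) - w q) (w (q + 1) - w q)

lemma Hopt_mono {qlow qhigh : ℤ} {lp lm kp km : ℝ} (phi : ℝ)
    (hlp : 0 < lp) (hlm : 0 < lm) (hkp : 0 < kp) (hkm : 0 < km) {q : ℤ} {p1 p2 p1' p2' : ℝ}
    (h1 : qlow < q → p1 ≤ p1') (h2 : q < qhigh → p2 ≤ p2') :
    Hopt qlow qhigh lp lm kp km phi q p1 p2 ≤ Hopt qlow qhigh lp lm kp km phi q p1' p2' := by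
  unfold Hopt
  gcongr ?_ + ?_ - _
  · split_ifs with h
    · have := h1 h
      gcongr
    · exact le_rfl
  · split_ifs with h
    · have := h2 h
      gcongr
    · exact le_rfl

/-- If `w - v` is maximal at `q` over `Ω^Q`, the Hamiltonian along `w` is at most that along `v`. -/
lemma Hopt_le_of_max {qlow qhigh : ℤ} {lp lm kp km : ℝ} (phi : ℝ)
    (hlp : 0 < lp) (hlm : 0 < lm) (hkp : 0 < kp) (hkm : 0 < km) {q : ℤ} {w v : ℤ → ℝ}
    (hq : q ∈ Finset.Icc qlow qhigh)
    (hmax : ∀ q' ∈ Finset.Icc qlow qhigh, w q' - v q' ≤ w q - v q) :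
    Hopt qlow qhigh lp lm kp km phi q (w (q - 1) - w q) (w (q + 1) - w q) ≤
      Hopt qlow qhigh lp lm kp km phi q (v (q - 1) - v q) (v (q + 1) - v q) := by
  rw [Finset.mem_Icc] at hq
  apply Hopt_mono phi hlp hlm hkp hkm
  · intro h
    have := hmax (q - 1) (Finset.mem_Icc.2 ⟨by omega, by omega⟩)
    linarith
  · intro h
    have := hmax (q + 1) (Finset.mem_Icc.2 ⟨by omega, by omega⟩)
    linarith

lemma statSol_le {qlow qhigh : ℤ} {lp lm kp km phi r : ℝ}
    (hlp : 0 < lp) (hlm : 0 < lm) (hkp : 0 < kp) (hkm : 0 < km) (hr : 0 < r) {w v : ℤ → ℝ}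
    (hw : IsStatSol qlow qhigh lp lm kp km phi r w)
    (hv : IsStatSol qlow qhigh lp lm kp km phi r v) {q : ℤ} (hq : q ∈ Finset.Icc qlow qhigh) :
    w q ≤ v q := by
  obtain ⟨m, hm, hmax⟩ := Finset.exists_max_image (Finset.Icc qlow qhigh)
    (fun q => w q - v q) ⟨q, hq⟩
  have h1 := Hopt_le_of_max phi hlp hlm hkp hkm hm hmax
  have h2 := hw m hm
  have h3 := hv m hm
  have h4 : r * w m ≤ r * v m := by linarith
  have h5 : w m ≤ v m := le_of_mul_le_mul_left h4 hr
  have h6 := hmax q hq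
  linarith

lemma exists_statSol (qlow qhigh : ℤ) {lp lm kp km phi r : ℝ}
    (hlp : 0 < lp) (hlm : 0 < lm) (hkp : 0 < kp) (hkm : 0 < km) (hphi : 0 ≤ phi) (hr : 0 < r) :
    ∃ w : ℤ → ℝ, IsStatSol qlow qhigh lp lm kp km phi r w := by
  set H := Hopt qlow qhigh lp lm kp km phi with hH
  obtain ⟨cL, hcL⟩ : ∃ c : ℝ, r * c = -(phi * ((qlow : ℝ) ^ 2 + (qhigh : ℝ) ^ 2)) :=
    ⟨-(phi * ((qlow : ℝ) ^ 2 + (qhigh : ℝ) ^ 2)) / r, by field_simp⟩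
  obtain ⟨cU, hcU⟩ : ∃ c : ℝ, r * c = (lp / kp) * Real.exp (-1) + (lm / km) * Real.exp (-1) :=
    ⟨((lp / kp) * Real.exp (-1) + (lm / km) * Real.exp (-1)) / r, by field_simp⟩
  have hp : 0 < (lp / kp) * Real.exp (-1) := by positivity
  have hm : 0 < (lm / km) * Real.exp (-1) := by positivity
  have hle : cL ≤ cU := by
    refine le_of_mul_le_mul_left ?_ hr
    rw [hcL, hcU]
    have : 0 ≤ phi * ((qlow : ℝ) ^ 2 + (qhigh : ℝ) ^ 2) := by positivity
    linarith
  have hU : ∀ q, H q 0 0 ≤ r * cU := by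
    intro q
    rw [hcU, hH]
    have h3 : 0 ≤ phi * (q : ℝ) ^ 2 := by positivity
    simp only [Hopt, mul_zero, zero_sub]
    split_ifs <;> linarith
  have hL : ∀ q ∈ Finset.Icc qlow qhigh, r * cL ≤ H q 0 0 := by
    intro q hq
    rw [Finset.mem_Icc] at hq
    rw [hcL, hH]
    have h3 : phi * (q : ℝ) ^ 2 ≤ phi * ((qlow : ℝ) ^ 2 + (qhigh : ℝ) ^ 2) := by
      have a1 : (qlow : ℝ) ≤ q := by exact_mod_cast hq.1
      have a2 : (q : ℝ) ≤ qhigh := by exact_mod_cast hq.2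
      gcongr
      rcases le_total 0 (q : ℝ) with h | h <;> nlinarith [sq_nonneg (qlow : ℝ),
        sq_nonneg (qhigh : ℝ)]
    simp only [Hopt, mul_zero, zero_sub]
    split_ifs <;> linarith
  -- solvability of the scalar equation at `q`, by the intermediate value theorem
  have key : ∀ (v : ℤ → Set.Icc cL cU) (q : ℤ), ∃ x : Set.Icc cL cU,
      q ∈ Finset.Icc qlow qhigh → r * (x : ℝ) = H q (v (q - 1) - x) (v (q + 1) - x) := by
    intro v q
    by_cases hq : q ∈ Finset.Icc qlow qhigh
    · have hcont : ContinuousOn (fun x : ℝ => r * x - H q (v (q - 1) - x) (v (q + 1) - x))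
          (Set.Icc cL cU) := by
        apply Continuous.continuousOn
        simp only [hH, Hopt]
        split_ifs <;> fun_prop
      have h0 : (0 : ℝ) ∈ Set.Icc (r * cL - H q (v (q - 1) - cL) (v (q + 1) - cL))
          (r * cU - H q (v (q - 1) - cU) (v (q + 1) - cU)) := by
        have b1 := (v (q - 1)).2
        have b2 := (v (q + 1)).2
        constructor
        · have : H q 0 0 ≤ H q (v (q - 1) - cL) (v (q + 1) - cL) :=
            Hopt_mono phi hlp hlm hkp hkm (fun _ => by linarith [b1.1]) (fun _ => by linarith [b2.1])
          linarith [hL q hq]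
        · have : H q (v (q - 1) - cU) (v (q + 1) - cU) ≤ H q 0 0 :=
            Hopt_mono phi hlp hlm hkp hkm (fun _ => by linarith [b1.2]) (fun _ => by linarith [b2.2])
          linarith [hU q]
      obtain ⟨x, hx, hx0⟩ := intermediate_value_Icc hle hcont h0
      exact ⟨⟨x, hx⟩, fun _ => by simp only at hx0 ⊢; linarith⟩
    · exact ⟨⟨cL, le_rfl, hle⟩, fun h => absurd h hq⟩
  choose G hG using key
  have : Fact (cL ≤ cU) := ⟨hle⟩
  -- outside `Ω^Q` the chosen values carry no information, so they are replaced by a constant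
  let F : (ℤ → Set.Icc cL cU) →o (ℤ → Set.Icc cL cU) :=
    { toFun := fun v q => if q ∈ Finset.Icc qlow qhigh then G v q else ⟨cL, le_rfl, hle⟩
      monotone' := by
        intro v v' hvv q
        by_cases hq : q ∈ Finset.Icc qlow qhigh
        · simp only [hq, if_true]
          have e1 := hG v q hq
          have e2 := hG v' q hq
          have m1 : (v (q - 1) : ℝ) ≤ v' (q - 1) := hvv (q - 1)
          have m2 : (v (q + 1) : ℝ) ≤ v' (q + 1) := hvv (q + 1)
          change (G v q : ℝ) ≤ G v' q
          by_contra! hlt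
          have : H q (v (q - 1) - G v q) (v (q + 1) - G v q) ≤
              H q (v' (q - 1) - G v' q) (v' (q + 1) - G v' q) :=
            Hopt_mono phi hlp hlm hkp hkm (fun _ => by linarith) (fun _ => by linarith)
          have := le_of_mul_le_mul_left (a := r) (by linarith : r * (G v q : ℝ) ≤ r * G v' q) hr
          linarith
        · simp only [hq, if_false]
          exact le_rfl }
  refine ⟨fun q => (OrderHom.lfp F q : ℝ), fun q hq => ?_⟩
  have hfix : F (OrderHom.lfp F) q = OrderHom.lfp F q := congrFun (OrderHom.map_lfp F) q
  have hF : F (OrderHom.lfp F) q = G (OrderHom.lfp F) q := if_pos hq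
  have := hG (OrderHom.lfp F) q hq
  rw [← hF, hfix] at this
  simp only
  linarith

/-- Backward maximum principle for finitely many curves: if the time derivative is nonnegative at
every spatial maximum, then earlier values are dominated by terminal ones. -/
lemma max_principle {ι : Type*} (s : Finset ι) (T : ℝ) (d d' : ι → ℝ → ℝ)
    (hc : ∀ q ∈ s, ContinuousOn (d q) (Set.Iic T))
    (hd : ∀ q ∈ s, ∀ t < T, HasDerivAt (d q) (d' q t) t)
    (hmax : ∀ q ∈ s, ∀ t < T, (∀ q' ∈ s, d q' t ≤ d q t) → 0 ≤ d' q t)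
    {M : ℝ} (hM : ∀ q ∈ s, d q T ≤ M) {t : ℝ} (ht : t ≤ T) {q : ι} (hq : q ∈ s) :
    d q t ≤ M := by
  -- the strict version for `d + ε (· - T)`, where `ε` rules out a zero derivative at the maximum
  have key : ∀ ε > 0, d q t + ε * (t - T) ≤ M := by
    intro ε hε
    have hmx : ∀ p ∈ s, ∃ x ∈ Set.Icc t T, ∀ y ∈ Set.Icc t T,
        d p y + ε * (y - T) ≤ d p x + ε * (x - T) := by
      intro p hp
      have : ContinuousOn (fun y => d p y + ε * (y - T)) (Set.Icc t T) :=
        ((hc p hp).mono fun y hy => hy.2).add (by fun_prop)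
      exact isCompact_Icc.exists_isMaxOn ⟨t, le_rfl, ht⟩ this
    choose! x hx hxm using hmx
    obtain ⟨p, hp, hpm⟩ := Finset.exists_max_image s (fun p => d p (x p) + ε * (x p - T)) ⟨q, hq⟩
    have hglob : ∀ p' ∈ s, ∀ y ∈ Set.Icc t T,
        d p' y + ε * (y - T) ≤ d p (x p) + ε * (x p - T) :=
      fun p' hp' y hy => (hxm p' hp' y hy).trans (hpm p' hp')
    have hxp := hx p hp
    rcases hxp.2.lt_or_eq with hlt | heq
    · exfalso
      have h0 : 0 ≤ d' p (x p) := hmax p hp _ hlt fun p' hp' => by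
        linarith [hglob p' hp' (x p) hxp]
      have hder : HasDerivAt (fun y => d p y + ε * (y - T)) (d' p (x p) + ε * 1) (x p) :=
        (hd p hp _ hlt).add (((hasDerivAt_id _).sub_const T).const_mul ε)
      have hsl := hder.hasDerivWithinAt (s := Set.Ioi (x p))
      rw [hasDerivWithinAt_iff_tendsto_slope' (by simp)] at hsl
      have hle : d' p (x p) + ε * 1 ≤ 0 := by
        refine le_of_tendsto hsl ?_
        filter_upwards [Ioo_mem_nhdsGT hlt] with y hy
        rw [slope_def_field]
        have := hglob p hp y ⟨hxp.1.trans hy.1.le, hy.2.le⟩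
        exact div_nonpos_of_nonpos_of_nonneg (by linarith) (by linarith [hy.1])
      linarith
    · have h1 := hglob q hq t ⟨le_rfl, ht⟩
      rw [heq] at h1
      linarith [hM p hp]
  refine le_of_tendsto (f := fun ε : ℝ => d q t + ε * (t - T)) (x := nhdsWithin 0 (Set.Ioi 0)) ?_
    (by filter_upwards [self_mem_nhdsWithin] with ε hε using key ε hε)
  have : Continuous fun ε : ℝ => d q t + ε * (t - T) := by fun_prop
  simpa using (this.tendsto 0).mono_left nhdsWithin_le_nhds

/-- Exponential estimate between a finite-horizon solution and a stationary one, with a constant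
controlled by the terminal data. -/
lemma fhSol_abs_le {qlow qhigh : ℤ} {lp lm kp km phi r alpha T : ℝ}
    (hlp : 0 < lp) (hlm : 0 < lm) (hkp : 0 < kp) (hkm : 0 < km) {u : ℝ → ℤ → ℝ} {w : ℤ → ℝ}
    (hu : IsFHSol qlow qhigh lp lm kp km phi r alpha T u)
    (hw : IsStatSol qlow qhigh lp lm kp km phi r w) {M : ℝ}
    (hM : ∀ q ∈ Finset.Icc qlow qhigh, |-alpha * (q : ℝ) ^ 2 - w q| ≤ M)
    {t : ℝ} (ht : t ≤ T) {q : ℤ} (hq : q ∈ Finset.Icc qlow qhigh) :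
    |u t q - w q| ≤ Real.exp (-(r * (T - t))) * M := by
  set d : ℤ → ℝ → ℝ := fun q t => Real.exp (r * (T - t)) * (u t q - w q) with hd
  set d' : ℤ → ℝ → ℝ := fun q t => Real.exp (r * (T - t)) *
    (Hopt qlow qhigh lp lm kp km phi q (w (q - 1) - w q) (w (q + 1) - w q) -
      Hopt qlow qhigh lp lm kp km phi q (u t (q - 1) - u t q) (u t (q + 1) - u t q)) with hd'
  have hc : ∀ q ∈ Finset.Icc qlow qhigh, ContinuousOn (d q) (Set.Iic T) := fun q hq =>
    ContinuousOn.mul (by fun_prop) ((hu q hq).1.continuousOn.sub continuousOn_const)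
  have hder : ∀ q ∈ Finset.Icc qlow qhigh, ∀ t < T, HasDerivAt (d q) (d' q t) t := by
    intro q hq t ht
    obtain ⟨h1, h2, -⟩ := hu q hq
    have h3 := ((h1.differentiableOn one_ne_zero) t ht.le).hasDerivWithinAt.hasDerivAt
      (Iic_mem_nhds ht)
    have h4 := h2 t ht.le
    have h5 := hw q hq
    have h6 : HasDerivAt (fun t => Real.exp (r * (T - t)))
        (Real.exp (r * (T - t)) * (r * (-1))) t :=
      (((hasDerivAt_id t).const_sub T).const_mul r).exp
    refine (h6.mul (h3.sub_const (w q))).congr_deriv ?_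
    simp only [hd']
    linear_combination Real.exp (r * (T - t)) * (h5 - h4)
  have hT : ∀ q ∈ Finset.Icc qlow qhigh, |d q T| ≤ M := by
    intro q hq
    simpa [hd, (hu q hq).2.2] using hM q hq
  have hup : d q t ≤ M := by
    refine max_principle _ T d d' hc hder ?_ (fun q hq => (abs_le.1 (hT q hq)).2) ht hq
    intro q hq t ht hmax
    refine mul_nonneg (Real.exp_pos _).le (sub_nonneg.2 ?_)
    exact Hopt_le_of_max phi hlp hlm hkp hkm (w := u t) (v := w) hq
      fun q' hq' => le_of_mul_le_mul_left (hmax q' hq') (Real.exp_pos _)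
  have hlo : -d q t ≤ M := by
    refine max_principle _ T (fun q t => -d q t) (fun q t => -d' q t) (fun q hq => (hc q hq).neg)
      (fun q hq t ht => (hder q hq t ht).neg) ?_
      (fun q hq => by linarith [(abs_le.1 (hT q hq)).1]) ht hq
    intro q hq t ht hmax
    refine neg_nonneg.2 (mul_nonpos_of_nonneg_of_nonpos (Real.exp_pos _).le (sub_nonpos.2 ?_))
    refine Hopt_le_of_max phi hlp hlm hkp hkm (w := w) (v := u t) hq fun q' hq' => ?_
    have := le_of_mul_le_mul_left (neg_le_neg_iff.1 (hmax q' hq')) (Real.exp_pos _)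
    linarith
  have habs : Real.exp (r * (T - t)) * |u t q - w q| ≤ M := by
    rw [← abs_of_pos (Real.exp_pos (r * (T - t))), ← abs_mul]
    exact abs_le.2 ⟨by linarith, hup⟩
  rw [Real.exp_neg, inv_mul_eq_div, le_div_iff₀ (Real.exp_pos _)]
  linarith

theorem stmt3 (qlow qhigh : ℤ) (hlow : qlow < 0) (hhigh : 0 < qhigh)
    (lp lm kp km phi : ℝ) (hlp : 0 < lp) (hlm : 0 < lm) (hkp : 0 < kp) (hkm : 0 < km)
    (hphi : 0 ≤ phi) (r alpha : ℝ) (hr : 0 < r) (halpha : 0 ≤ alpha) :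
    ∃ ur : ℤ → ℝ,
      -- existence
      IsStatSol qlow qhigh lp lm kp km phi r ur ∧
      -- uniqueness (on Ω^Q)
      (∀ w : ℤ → ℝ, IsStatSol qlow qhigh lp lm kp km phi r w →
        ∀ q ∈ Finset.Icc qlow qhigh, w q = ur q) ∧
      -- the finite-horizon solutions converge to `ur` as T → ∞, for every fixed t
      (∀ U : ℝ → ℝ → ℤ → ℝ,
        (∀ T : ℝ, IsFHSol qlow qhigh lp lm kp km phi r alpha T (U T)) →
        ∀ t : ℝ, ∀ q ∈ Finset.Icc qlow qhigh,
          Tendsto (fun T => U T t q) atTop (nhds (ur q))) := by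
  obtain ⟨w, hw⟩ := exists_statSol qlow qhigh hlp hlm hkp hkm hphi hr
  refine ⟨w, hw, fun v hv q hq => le_antisymm (statSol_le hlp hlm hkp hkm hr hv hw hq)
    (statSol_le hlp hlm hkp hkm hr hw hv hq), fun U hU t q hq => ?_⟩
  set M := ∑ q ∈ Finset.Icc qlow qhigh, |-alpha * (q : ℝ) ^ 2 - w q| with hMdef
  have hM : ∀ q ∈ Finset.Icc qlow qhigh, |-alpha * (q : ℝ) ^ 2 - w q| ≤ M := fun q hq =>
    Finset.single_le_sum (f := fun q : ℤ => |-alpha * (q : ℝ) ^ 2 - w q|)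
      (fun _ _ => abs_nonneg _) hq
  have hlim : Tendsto (fun T => Real.exp (-(r * (T - t))) * M) atTop (nhds 0) := by
    have h1 : Tendsto (fun T : ℝ => r * (T - t)) atTop atTop :=
      (tendsto_atTop_add_const_right atTop (-t) tendsto_id).const_mul_atTop hr
    simpa using (Real.tendsto_exp_neg_atTop_nhds_zero.comp h1).mul_const M
  rw [tendsto_iff_dist_tendsto_zero]
  refine squeeze_zero' (Eventually.of_forall fun _ => dist_nonneg) ?_ hlim
  filter_upwards [eventually_ge_atTop t] with T hT
  rw [Real.dist_eq]
  exact fhSol_abs_le hlp hlm hkp hkm (hU T) hw hM hT hq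
end

section
/- Let γ ∈ ℝ and let v, w : Ω^Q → ℝ be two functions such that both (γ, v) and (γ, w) solve the ergodic HJB equation, i.e. 0 = −γ + H(q, v(q−1) − v(q), v(q+1) − v(q)) and 0 = −γ + H(q, w(q−1) − w(q), w(q+1) − w(q)) for all q ∈ Ω^Q. Then there exists a constant η ∈ ℝ such that v(q) = w(q) + η for all q ∈ Ω^Q. -/
/-- The upward term of the Hamiltonian determines the upward increment. -/
lemma exp_term_injective {lm km a b : ℝ} (hlm : 0 < lm) (hkm : 0 < km)
    (h : (lm / km) * Real.exp (km * a - 1) = (lm / km) * Real.exp (km * b - 1)) : a = b := by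
  have h1 := Real.exp_injective (mul_left_cancel₀ (div_pos hlm hkm).ne' h)
  exact mul_left_cancel₀ hkm.ne' (by linarith)

theorem stmt6 (qlow qhigh : ℤ) (hlow : qlow < 0) (hhigh : 0 < qhigh)
    (lp lm kp km phi : ℝ) (hlp : 0 < lp) (hlm : 0 < lm) (hkp : 0 < kp) (hkm : 0 < km)
    (hphi : 0 ≤ phi) (gam : ℝ) (v w : ℤ → ℝ)
    (hv : ∀ q ∈ Finset.Icc qlow qhigh,
      0 = -gam + Hopt qlow qhigh lp lm kp km phi q (v (q - 1) - v q) (v (q + 1) - v q))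
    (hw : ∀ q ∈ Finset.Icc qlow qhigh,
      0 = -gam + Hopt qlow qhigh lp lm kp km phi q (w (q - 1) - w q) (w (q + 1) - w q)) :
    ∃ eta : ℝ, ∀ q ∈ Finset.Icc qlow qhigh, v q = w q + eta := by
  have incr : ∀ q, qlow ≤ q → q < qhigh → v (q + 1) - v q = w (q + 1) - w q := by
    intro q hq
    induction q, hq using Int.le_induction with
    | base =>
      intro hlt
      have h1 := hv qlow (Finset.mem_Icc.2 ⟨le_rfl, hlt.le⟩)
      have h2 := hw qlow (Finset.mem_Icc.2 ⟨le_rfl, hlt.le⟩)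
      simp only [Hopt, lt_irrefl, if_false, if_pos hlt] at h1 h2
      exact exp_term_injective hlm hkm (by linarith)
    | succ n hn ih =>
      intro hlt
      have hprev := ih (by omega)
      have h1 := hv (n + 1) (Finset.mem_Icc.2 ⟨by omega, hlt.le⟩)
      have h2 := hw (n + 1) (Finset.mem_Icc.2 ⟨by omega, hlt.le⟩)
      have hpos : qlow < n + 1 := by omega
      simp only [Hopt, if_pos hpos, if_pos hlt, add_sub_cancel_right] at h1 h2
      have hdown : v n - v (n + 1) = w n - w (n + 1) := by linarith
      rw [hdown] at h1
      exact exp_term_injective hlm hkm (by linarith)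
  refine ⟨v qlow - w qlow, fun q hq => ?_⟩
  obtain ⟨hq1, hq2⟩ := Finset.mem_Icc.1 hq
  clear hq
  induction q, hq1 using Int.le_induction with
  | base => ring
  | succ n hn ih =>
    have h1 := ih (by omega)
    have h2 := incr n hn (by omega)
    linarith
end

section
/- Assume κ⁺ = κ⁻ = κ > 0. Every root of the characteristic polynomial of A is real; let λ_max be the largest eigenvalue of A and set C = A − λ_max·I. Then the kernel of C is one-dimensional: there exists a vector ω̂ ∈ ℝ^{Ω^Q} with all entries strictly positive such that C ω̂ = 0, and every vector ω with C ω = 0 is a scalar multiple of ω̂. -/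
/-!
The matrix `A` is tridiagonal with constant positive off-diagonal entries `a = lp / e` (below) and
`b = lm / e` (above). Conjugating by the diagonal matrix with entries `r ^ q`, where `a r² = b`,
turns `A` into a symmetric matrix `S`, so all roots of the characteristic polynomial are real.

If `l` is the largest eigenvalue of `S`, then `M = l - S` is positive semidefinite. Since the
off-diagonal entries of `S` are nonnegative, `|x|ᵀ M |x| ≤ xᵀ M x`, so `M x = 0` forces `M |x| = 0`
(`mulVec_abs_eq_zero`). A nonnegative kernel vector with a zero entry vanishes at the neighbours of
that entry, hence everywhere, as the index set is an interval (`eq_zero_of_apply_eq_zero`).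
So any nonzero kernel vector has an absolute value that is a strictly positive kernel vector, and
two kernel vectors are proportional, because a suitable combination vanishes at one index. This
gives the one-dimensionality for `S` (`exists_pos_of_isGreatest`), and conjugation carries it
back to `A`.
-/

/-- The matrix `A` from Theorem 2.2, rows and columns indexed by `Ω^Q = {q̲, …, q̄}`. -/
noncomputable def Amat (qlow qhigh : ℤ) (lp lm kappa phi : ℝ) :
    Matrix {q : ℤ // q ∈ Finset.Icc qlow qhigh} {q : ℤ // q ∈ Finset.Icc qlow qhigh} ℝ :=
  fun q q' =>
    if (q' : ℤ) = (q : ℤ) then -phi * kappa * ((q : ℤ) : ℝ) ^ 2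
    else if (q' : ℤ) = (q : ℤ) - 1 then lp * Real.exp (-1)
    else if (q' : ℤ) = (q : ℤ) + 1 then lm * Real.exp (-1)
    else 0

open Matrix in
lemma isRoot_charpoly_iff {n : Type*} [Fintype n] [DecidableEq n] (S : Matrix n n ℝ) (l : ℝ) :
    S.charpoly.IsRoot l ↔ ∃ v, v ≠ 0 ∧ S *ᵥ v = l • v := by
  rw [Polynomial.IsRoot.def, Matrix.eval_charpoly, ← Matrix.exists_mulVec_eq_zero_iff]
  refine exists_congr fun v => and_congr_right fun _ => ?_
  rw [Matrix.sub_mulVec, sub_eq_zero, Matrix.scalar_apply, ← Matrix.smul_one_eq_diagonal,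
    Matrix.smul_mulVec, Matrix.one_mulVec, eq_comm]

open Matrix in
lemma posSemidef_of_isGreatest {n : Type*} [Fintype n] [DecidableEq n] {S : Matrix n n ℝ}
    (hS : S.IsHermitian) {l : ℝ} (hl : IsGreatest {mu : ℝ | S.charpoly.IsRoot mu} l) :
    (l • (1 : Matrix n n ℝ) - S).PosSemidef := by
  have hM : (l • (1 : Matrix n n ℝ) - S).IsHermitian := by
    refine Matrix.IsHermitian.sub ?_ hS
    simp [Matrix.IsHermitian]
  rw [hM.posSemidef_iff_eigenvalues_nonneg]
  intro i
  have h := hM.mulVec_eigenvectorBasis i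
  -- an eigenvalue `m` of `l - S` gives the eigenvalue `l - m` of `S`
  have hr : S.charpoly.IsRoot (l - hM.eigenvalues i) := by
    rw [isRoot_charpoly_iff]
    refine ⟨⇑(hM.eigenvectorBasis i), ?_, ?_⟩
    · intro h0
      apply hM.eigenvectorBasis.orthonormal.ne_zero i
      ext j
      exact congrFun h0 j
    · rw [Matrix.sub_mulVec, Matrix.smul_mulVec, Matrix.one_mulVec] at h
      rw [sub_smul, ← h]
      abel
  have := hl.2 hr
  simp only [Pi.zero_apply]
  linarith

/-- Replacing `x` by `|x|` does not increase the quadratic form of `l - S`, which is nonnegative,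
so `|x|` stays in its zero set. -/
lemma mulVec_abs_eq_zero {n : Type*} [Fintype n] [DecidableEq n] {S : Matrix n n ℝ} {l : ℝ}
    (hP : (l • (1 : Matrix n n ℝ) - S).PosSemidef) (hoff : ∀ i j, i ≠ j → 0 ≤ S i j)
    {x : n → ℝ} (hx : (l • (1 : Matrix n n ℝ) - S).mulVec x = 0) :
    (l • (1 : Matrix n n ℝ) - S).mulVec (fun i => |x i|) = 0 := by
  set M := l • (1 : Matrix n n ℝ) - S with hMdef
  have key : (fun i => |x i|) ⬝ᵥ M.mulVec (fun i => |x i|) ≤ x ⬝ᵥ M.mulVec x := by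
    simp only [dotProduct, Matrix.mulVec, Finset.mul_sum]
    refine Finset.sum_le_sum fun i _ => Finset.sum_le_sum fun j _ => ?_
    by_cases hij : i = j
    · subst hij
      have := abs_mul_abs_self (x i)
      apply le_of_eq
      linear_combination M i i * this
    · have h1 : M i j = - S i j := by simp [hMdef, hij]
      have h2 : x i * x j ≤ |x i| * |x j| := by
        rw [← abs_mul]; exact le_abs_self _
      rw [h1]
      nlinarith [mul_le_mul_of_nonneg_left h2 (hoff i j hij)]
  rw [hx, dotProduct_zero] at key
  have h0 := hP.dotProduct_mulVec_nonneg (fun i => |x i|)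
  rw [← hP.dotProduct_mulVec_zero_iff]
  exact le_antisymm (by simpa using key) h0

/-- A kernel vector of `l - S` with a zero entry vanishes: at a zero of `|x|` the eigenvalue
equation is a vanishing sum of nonnegative terms, so zeros spread along positive entries of `S`. -/
lemma eq_zero_of_apply_eq_zero {n : Type*} [Fintype n] [DecidableEq n] {S : Matrix n n ℝ} {l : ℝ}
    (hP : (l • (1 : Matrix n n ℝ) - S).PosSemidef) (hoff : ∀ i j, i ≠ j → 0 ≤ S i j)
    (hirr : ∀ i j, Relation.ReflTransGen (fun i j => 0 < S i j) i j)
    {x : n → ℝ} (hx : (l • (1 : Matrix n n ℝ) - S).mulVec x = 0) {i₀ : n} (h0 : x i₀ = 0) :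
    x = 0 := by
  have habs := mulVec_abs_eq_zero hP hoff hx
  have step : ∀ i j, 0 < S i j → x i = 0 → x j = 0 := by
    intro i j hij hi
    have h := congrFun habs i
    rw [Matrix.sub_mulVec, Matrix.smul_mulVec, Matrix.one_mulVec] at h
    simp only [Pi.sub_apply, Pi.smul_apply, hi, abs_zero, smul_zero, zero_sub, Pi.zero_apply,
      neg_eq_zero, Matrix.mulVec, dotProduct] at h
    have hnn : ∀ k ∈ Finset.univ, 0 ≤ S i k * |x k| := by
      intro k _
      by_cases hk : i = k
      · subst hk; simp [hi]
      · exact mul_nonneg (hoff i k hk) (abs_nonneg _)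
    have := (Finset.sum_eq_zero_iff_of_nonneg hnn).1 h j (Finset.mem_univ _)
    simpa [hij.ne'] using this
  funext j
  have hj := hirr i₀ j
  induction hj with
  | refl => exact h0
  | tail _ hbc ih => exact step _ _ hbc ih

/-- The Perron–Frobenius statement for a symmetric irreducible matrix with nonnegative off-diagonal
entries. -/
lemma exists_pos_of_isGreatest {n : Type*} [Fintype n] [DecidableEq n] [Nonempty n]
    {S : Matrix n n ℝ} {l : ℝ}
    (hS : S.IsHermitian) (hl : IsGreatest {mu : ℝ | S.charpoly.IsRoot mu} l)
    (hoff : ∀ i j, i ≠ j → 0 ≤ S i j)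
    (hirr : ∀ i j, Relation.ReflTransGen (fun i j => 0 < S i j) i j) :
    ∃ v : n → ℝ, (∀ i, 0 < v i) ∧ S.mulVec v = l • v ∧
      ∀ w : n → ℝ, S.mulVec w = l • w → ∃ c : ℝ, w = c • v := by
  have hP := posSemidef_of_isGreatest hS hl
  have hker : ∀ w, (l • (1 : Matrix n n ℝ) - S).mulVec w = 0 ↔ S.mulVec w = l • w := by
    intro w
    rw [Matrix.sub_mulVec, Matrix.smul_mulVec, Matrix.one_mulVec, sub_eq_zero, eq_comm]
  obtain ⟨x, hx0, hx⟩ := (isRoot_charpoly_iff S l).1 hl.1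
  have hx' := (hker x).2 hx
  have habs := mulVec_abs_eq_zero hP hoff hx'
  have hpos : ∀ i, 0 < |x i| := fun i =>
    abs_pos.2 fun h => hx0 (eq_zero_of_apply_eq_zero hP hoff hirr hx' h)
  refine ⟨fun i => |x i|, hpos, (hker _).1 habs, fun w hw => ?_⟩
  obtain ⟨i₀⟩ := ‹Nonempty n›
  refine ⟨w i₀ / |x i₀|, ?_⟩
  rw [← sub_eq_zero]
  refine eq_zero_of_apply_eq_zero hP hoff hirr (i₀ := i₀) ?_ ?_
  · rw [Matrix.mulVec_sub, Matrix.mulVec_smul, habs, (hker w).2 hw]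
    simp
  · have := (hpos i₀).ne'
    simp only [Pi.sub_apply, Pi.smul_apply, smul_eq_mul]
    field_simp
    simp

/-- Consecutive integers of an interval connect all of its points. -/
lemma reflTransGen_of_adjacent {lo hi : ℤ}
    (R : {q : ℤ // q ∈ Finset.Icc lo hi} → {q : ℤ // q ∈ Finset.Icc lo hi} → Prop)
    (hup : ∀ i j : {q : ℤ // q ∈ Finset.Icc lo hi}, (j : ℤ) = i + 1 → R i j)
    (hdown : ∀ i j : {q : ℤ // q ∈ Finset.Icc lo hi}, (j : ℤ) = i - 1 → R i j)
    (i j : {q : ℤ // q ∈ Finset.Icc lo hi}) : Relation.ReflTransGen R i j := by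
  have main : ∀ k : ℕ, ∀ i j : {q : ℤ // q ∈ Finset.Icc lo hi},
      ((i : ℤ) - j).natAbs = k → Relation.ReflTransGen R i j := by
    intro k
    induction k with
    | zero =>
      intro i j h
      have : i = j := Subtype.ext (by omega)
      rw [this]
    | succ k ih =>
      intro i j h
      have hi' := Finset.mem_Icc.1 i.2
      have hj' := Finset.mem_Icc.1 j.2
      rcases lt_or_ge (i : ℤ) j with hlt | hge
      · have hm : (i : ℤ) + 1 ∈ Finset.Icc lo hi := Finset.mem_Icc.2 ⟨by omega, by omega⟩
        exact Relation.ReflTransGen.head (hup i ⟨_, hm⟩ rfl) (ih ⟨_, hm⟩ j (by simp only; omega))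
      · have hm : (i : ℤ) - 1 ∈ Finset.Icc lo hi := Finset.mem_Icc.2 ⟨by omega, by omega⟩
        exact Relation.ReflTransGen.head (hdown i ⟨_, hm⟩ rfl) (ih ⟨_, hm⟩ j (by simp only; omega))
  exact main _ i j rfl

theorem stmt8 (qlow qhigh : ℤ) (hlow : qlow < 0) (hhigh : 0 < qhigh)
    (lp lm kappa phi : ℝ) (hlp : 0 < lp) (hlm : 0 < lm) (hkappa : 0 < kappa)
    (hphi : 0 ≤ phi) :
    -- every (complex) root of the characteristic polynomial of A is real
    (∀ mu : ℂ,
      ((Amat qlow qhigh lp lm kappa phi).charpoly.map (algebraMap ℝ ℂ)).IsRoot mu →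
      mu.im = 0) ∧
    -- for λ_max the largest eigenvalue, ker(A − λ_max I) is one-dimensional and spanned
    -- by a strictly positive vector
    (∀ lmax : ℝ,
      IsGreatest {mu : ℝ | (Amat qlow qhigh lp lm kappa phi).charpoly.IsRoot mu} lmax →
      ∃ omega : {q : ℤ // q ∈ Finset.Icc qlow qhigh} → ℝ,
        (∀ q, 0 < omega q) ∧
        (Amat qlow qhigh lp lm kappa phi - lmax • (1 : Matrix _ _ ℝ)).mulVec omega = 0 ∧
        ∀ w : {q : ℤ // q ∈ Finset.Icc qlow qhigh} → ℝ,
          (Amat qlow qhigh lp lm kappa phi - lmax • (1 : Matrix _ _ ℝ)).mulVec w = 0 →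
          ∃ c : ℝ, w = c • omega) := by
  set A := Amat qlow qhigh lp lm kappa phi with hA
  have he := Real.exp_pos (-1)
  obtain ⟨r, hr, hr2⟩ : ∃ r : ℝ, 0 < r ∧ lp * r ^ 2 = lm := by
    refine ⟨√(lm / lp), Real.sqrt_pos.2 (by positivity), ?_⟩
    rw [Real.sq_sqrt (by positivity)]
    field_simp
  let d : {q : ℤ // q ∈ Finset.Icc qlow qhigh} → ℝ := fun q => r ^ (q : ℤ)
  have hd : ∀ q, 0 < d q := fun q => zpow_pos hr _
  let S : Matrix {q : ℤ // q ∈ Finset.Icc qlow qhigh} {q : ℤ // q ∈ Finset.Icc qlow qhigh} ℝ :=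
    Matrix.of fun q q' => d q * A q q' * (d q')⁻¹
  have hentry_down : ∀ i j : {q : ℤ // q ∈ Finset.Icc qlow qhigh}, (j : ℤ) = i - 1 →
      S i j = lp * Real.exp (-1) * r := by
    intro i j h
    have h1 : A i j = lp * Real.exp (-1) := by
      simp [hA, Amat, h]
    have h2 : d i = d j * r := by
      simp only [d, h]
      rw [← zpow_add_one₀ hr.ne', sub_add_cancel]
    have := (hd j).ne'
    simp only [S, Matrix.of_apply, h1, h2]
    field_simp
  have hentry_up : ∀ i j : {q : ℤ // q ∈ Finset.Icc qlow qhigh}, (j : ℤ) = i + 1 →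
      S i j = lp * Real.exp (-1) * r := by
    intro i j h
    have h1 : A i j = lm * Real.exp (-1) := by
      have h3 : ¬ ((i : ℤ) + 1 = i - 1) := by omega
      simp [hA, Amat, h, h3]
    have h2 : d j = d i * r := by
      simp only [d, h]
      rw [← zpow_add_one₀ hr.ne']
    have := (hd i).ne'
    simp only [S, Matrix.of_apply, h1, h2, ← hr2]
    field_simp
  have hentry_far : ∀ i j : {q : ℤ // q ∈ Finset.Icc qlow qhigh}, i ≠ j → (j : ℤ) ≠ i - 1 →
      (j : ℤ) ≠ i + 1 → S i j = 0 := by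
    intro i j h0 h1 h2
    have h0' : (j : ℤ) ≠ i := fun h => h0 (Subtype.ext h.symm)
    simp only [S, Matrix.of_apply, hA, Amat, if_neg h0', if_neg h1, if_neg h2]
    simp
  have hpos : 0 < lp * Real.exp (-1) * r := by positivity
  have hS : S.IsHermitian := by
    ext i j
    simp only [Matrix.conjTranspose_apply, star_trivial]
    by_cases h0 : i = j
    · rw [h0]
    by_cases h1 : (j : ℤ) = i - 1
    · rw [hentry_down i j h1, hentry_up j i (by omega)]
    by_cases h2 : (j : ℤ) = i + 1
    · rw [hentry_up i j h2, hentry_down j i (by omega)]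
    rw [hentry_far i j h0 h1 h2, hentry_far j i (Ne.symm h0) (by omega) (by omega)]
  have hoff : ∀ i j, i ≠ j → 0 ≤ S i j := by
    intro i j h0
    by_cases h1 : (j : ℤ) = i - 1
    · exact (hentry_down i j h1).symm ▸ hpos.le
    by_cases h2 : (j : ℤ) = i + 1
    · exact (hentry_up i j h2).symm ▸ hpos.le
    exact (hentry_far i j h0 h1 h2).ge
  have hirr : ∀ i j, Relation.ReflTransGen (fun i j => 0 < S i j) i j :=
    reflTransGen_of_adjacent _ (fun i j h => (hentry_up i j h).symm ▸ hpos)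
      (fun i j h => (hentry_down i j h).symm ▸ hpos)
  have hSD : S = Matrix.diagonal d * A * Matrix.diagonal (fun q => (d q)⁻¹) := by
    ext i j
    simp [S, Matrix.mul_diagonal, Matrix.diagonal_mul]
  have hDD : Matrix.diagonal (fun q => (d q)⁻¹) * Matrix.diagonal d = 1 := by
    rw [Matrix.diagonal_mul_diagonal, ← Matrix.diagonal_one]
    congr 1
    funext q
    exact inv_mul_cancel₀ (hd q).ne'
  have hchar : S.charpoly = A.charpoly := by
    rw [hSD, Matrix.charpoly_mul_comm, ← Matrix.mul_assoc, hDD, Matrix.one_mul]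
  -- the eigenvalue equation for `A` at `w` is the one for `S` at `d * w`
  have htrans : ∀ (l : ℝ) (w : {q : ℤ // q ∈ Finset.Icc qlow qhigh} → ℝ),
      (A - l • (1 : Matrix _ _ ℝ)).mulVec w = 0 ↔ S.mulVec (d * w) = l • (d * w) := by
    intro l w
    have h1 : S.mulVec (d * w) = d * A.mulVec w := by
      funext i
      simp only [Matrix.mulVec, dotProduct, Pi.mul_apply, Finset.mul_sum]
      refine Finset.sum_congr rfl fun j _ => ?_
      have := (hd j).ne'
      simp only [S, Matrix.of_apply]
      field_simp
    rw [Matrix.sub_mulVec, Matrix.smul_mulVec, Matrix.one_mulVec, sub_eq_zero, h1,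
      ← mul_smul_comm]
    constructor
    · intro h
      rw [h]
    · intro h
      funext i
      exact mul_left_cancel₀ (hd i).ne' (congrFun h i)
  refine ⟨?_, ?_⟩
  · intro mu hmu
    rw [← hchar, hS.charpoly_eq] at hmu
    simp only [Polynomial.map_prod, Polynomial.IsRoot.def, Polynomial.eval_prod,
      Finset.prod_eq_zero_iff] at hmu
    obtain ⟨i, _, hi⟩ := hmu
    have hmu' : mu = ((hS.eigenvalues i : ℝ) : ℂ) := by
      simpa [sub_eq_zero] using hi
    rw [hmu', Complex.ofReal_im]
  · intro l hl
    haveI : Nonempty {q : ℤ // q ∈ Finset.Icc qlow qhigh} :=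
      ⟨⟨0, Finset.mem_Icc.2 ⟨hlow.le, hhigh.le⟩⟩⟩
    rw [← hchar] at hl
    obtain ⟨v, hv, hSv, huniq⟩ := exists_pos_of_isGreatest hS hl hoff hirr
    have hdv : d * (fun q => v q / d q) = v := by
      funext q
      exact mul_div_cancel₀ _ (hd q).ne'
    refine ⟨fun q => v q / d q, fun q => div_pos (hv q) (hd q), ?_, fun w hw => ?_⟩
    · rw [htrans, hdv]
      exact hSv
    · obtain ⟨c, hc⟩ := huniq _ ((htrans l w).1 hw)
      refine ⟨c, ?_⟩
      funext q
      have h := congrFun hc q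
      have := (hd q).ne'
      simp only [Pi.mul_apply, Pi.smul_apply, smul_eq_mul] at h ⊢
      field_simp
      linarith
end

section
/- For every N ≥ 1, all reals δ_1, …, δ_N ∈ [δ̲, δ̄] and all Y_1, …, Y_N ∈ {0, 1}, there exists a unique κ_N ∈ (0, ∞) such that g_N(κ_N) = 0. -/
/-!
The score is continuous and strictly decreasing on `(0, ∞)`, positive near `0` and negative far
out, so it has exactly one zero there.

Every `Y n` lies in `{0, 1}`, so `scoreBase` is a constant plus nonnegative multiples of the
decreasing functions `κ ↦ e^{-κ δ} / (1 - e^{-κ δ})`, and the `d0` term has a positive coefficient;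
this gives strict monotonicity. Past `Khigh` the score is affine with slope `-J(Khigh) < 0`. Both
branches are combined in `score_eq` as
`scoreBase (min κ Khigh) - max (κ - Khigh) 0 * J(Khigh)`. Positivity near `0` comes from
`e^{-x} / (1 - e^{-x}) ≥ 1 / x - 1`, which makes the `d0` term at least `1 / κ - d0`.
-/

/-- The (negative) second derivative `J_N(κ)` of the regularised log-likelihood. -/
noncomputable def Jfun (d0 : ℝ) (delta Y : ℕ → ℝ) (N : ℕ) (kappa : ℝ) : ℝ :=
  (∑ n ∈ Finset.Icc 1 N,
      (1 - Y n) * (delta n) ^ 2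
        * (Real.exp (-(kappa * delta n)) / (1 - Real.exp (-(kappa * delta n))) ^ 2))
    + d0 ^ 2 * (Real.exp (-(kappa * d0)) / (1 - Real.exp (-(kappa * d0))) ^ 2)

/-- The first branch of the regularised score (valid for `κ ≤ K̄`). -/
noncomputable def scoreBase (d0 : ℝ) (delta Y : ℕ → ℝ) (N : ℕ) (kappa : ℝ) : ℝ :=
  (∑ n ∈ Finset.Icc 1 N,
      (-(delta n * Y n)
        + (1 - Y n) * delta n
            * (Real.exp (-(kappa * delta n)) / (1 - Real.exp (-(kappa * delta n))))))
    - d0 + d0 * (Real.exp (-(kappa * d0)) / (1 - Real.exp (-(kappa * d0))))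

/-- The regularised score `g_N(κ)`, i.e. the derivative of the regularised
log-likelihood `ℓ̃_N`. -/
noncomputable def score (d0 Khigh : ℝ) (delta Y : ℕ → ℝ) (N : ℕ) (kappa : ℝ) : ℝ :=
  if kappa ≤ Khigh then scoreBase d0 delta Y N kappa
  else scoreBase d0 delta Y N Khigh - (kappa - Khigh) * Jfun d0 delta Y N Khigh

lemma one_sub_exp_neg_pos {x : ℝ} (hx : 0 < x) : 0 < 1 - Real.exp (-x) := by
  have : Real.exp (-x) < 1 := by
    rw [← Real.exp_zero]
    exact Real.exp_lt_exp.2 (by linarith)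
  linarith

lemma exp_ratio_strictAnti {x y : ℝ} (hx : 0 < x) (hxy : x < y) :
    Real.exp (-y) / (1 - Real.exp (-y)) < Real.exp (-x) / (1 - Real.exp (-x)) := by
  have h : Real.exp (-y) < Real.exp (-x) := Real.exp_lt_exp.2 (by linarith)
  rw [div_lt_div_iff₀ (one_sub_exp_neg_pos (hx.trans hxy)) (one_sub_exp_neg_pos hx)]
  linarith

lemma exp_ratio_lower {x : ℝ} (hx : 0 < x) :
    1 / x - 1 ≤ Real.exp (-x) / (1 - Real.exp (-x)) := by
  have h1 := one_sub_exp_neg_pos hx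
  have h2 := Real.add_one_le_exp (-x)
  have h3 : Real.exp (-x) / (1 - Real.exp (-x)) = 1 / (1 - Real.exp (-x)) - 1 := by
    field_simp
    ring
  have h4 : 1 / x ≤ 1 / (1 - Real.exp (-x)) := one_div_le_one_div_of_le h1 (by linarith)
  linarith

lemma scoreBase_strictAnti {d0 : ℝ} {delta Y : ℕ → ℝ} {N : ℕ} (hd0 : 0 < d0)
    (hd : ∀ n ∈ Finset.Icc 1 N, 0 < delta n) (hY : ∀ n ∈ Finset.Icc 1 N, Y n ≤ 1)
    {a b : ℝ} (ha : 0 < a) (hab : a < b) :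
    scoreBase d0 delta Y N b < scoreBase d0 delta Y N a := by
  have h0 := mul_lt_mul_of_pos_left
    (exp_ratio_strictAnti (mul_pos ha hd0) (mul_lt_mul_of_pos_right hab hd0)) hd0
  unfold scoreBase
  refine add_lt_add_of_le_of_lt (sub_le_sub_right (Finset.sum_le_sum fun n hn => ?_) _) h0
  have hdn := hd n hn
  have h1 := (exp_ratio_strictAnti (mul_pos ha hdn) (mul_lt_mul_of_pos_right hab hdn)).le
  have h2 : 0 ≤ (1 - Y n) * delta n := mul_nonneg (by linarith [hY n hn]) hdn.le
  linarith [mul_le_mul_of_nonneg_left h1 h2]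

lemma scoreBase_continuousOn {d0 : ℝ} {delta Y : ℕ → ℝ} {N : ℕ} (hd0 : 0 < d0)
    (hd : ∀ n ∈ Finset.Icc 1 N, 0 < delta n) :
    ContinuousOn (scoreBase d0 delta Y N) (Set.Ioi 0) := by
  have key : ∀ d : ℝ, 0 < d → ContinuousOn
      (fun k : ℝ => Real.exp (-(k * d)) / (1 - Real.exp (-(k * d)))) (Set.Ioi 0) := by
    intro d hd
    refine ContinuousOn.div (by fun_prop) (by fun_prop) fun k hk => ?_
    exact (one_sub_exp_neg_pos (mul_pos hk hd)).ne'
  unfold scoreBase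
  refine ContinuousOn.add (ContinuousOn.sub (continuousOn_finsetSum _ fun n hn => ?_)
    continuousOn_const) (continuousOn_const.mul (key d0 hd0))
  exact continuousOn_const.add (continuousOn_const.mul (key _ (hd n hn)))

/-- Since `d0 * (1 / (κ * d0) - 1) = 1 / κ - d0`, the `d0` term forces the score to blow up
as `κ → 0`. -/
lemma scoreBase_lower {d0 : ℝ} {delta Y : ℕ → ℝ} {N : ℕ} (hd0 : 0 < d0)
    (hd : ∀ n ∈ Finset.Icc 1 N, 0 < delta n) (hY : ∀ n ∈ Finset.Icc 1 N, Y n ≤ 1)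
    {k : ℝ} (hk : 0 < k) :
    1 / k - 2 * d0 - ∑ n ∈ Finset.Icc 1 N, delta n * Y n ≤ scoreBase d0 delta Y N k := by
  have h0 := mul_le_mul_of_nonneg_left (exp_ratio_lower (mul_pos hk hd0)) hd0.le
  have h1 : d0 * (1 / (k * d0) - 1) = 1 / k - d0 := by field_simp
  have h2 : ∑ n ∈ Finset.Icc 1 N, -(delta n * Y n) ≤ ∑ n ∈ Finset.Icc 1 N,
      (-(delta n * Y n) + (1 - Y n) * delta n
        * (Real.exp (-(k * delta n)) / (1 - Real.exp (-(k * delta n))))) := by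
    refine Finset.sum_le_sum fun n hn => ?_
    have hdn := hd n hn
    have h3 : 0 ≤ (1 - Y n) * delta n := mul_nonneg (by linarith [hY n hn]) hdn.le
    have h4 := div_pos (Real.exp_pos (-(k * delta n))) (one_sub_exp_neg_pos (mul_pos hk hdn))
    linarith [mul_nonneg h3 h4.le]
  rw [Finset.sum_neg_distrib] at h2
  unfold scoreBase
  linarith

lemma Jfun_pos {d0 : ℝ} {delta Y : ℕ → ℝ} {N : ℕ} (hd0 : 0 < d0)
    (hY : ∀ n ∈ Finset.Icc 1 N, Y n ≤ 1) {k : ℝ} (hk : 0 < k) :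
    0 < Jfun d0 delta Y N k := by
  have h0 := one_sub_exp_neg_pos (mul_pos hk hd0)
  unfold Jfun
  refine add_pos_of_nonneg_of_pos (Finset.sum_nonneg fun n hn => ?_) (by positivity)
  have : 0 ≤ 1 - Y n := by linarith [hY n hn]
  positivity

lemma score_eq (d0 Khigh : ℝ) (delta Y : ℕ → ℝ) (N : ℕ) (k : ℝ) :
    score d0 Khigh delta Y N k =
      scoreBase d0 delta Y N (min k Khigh) - max (k - Khigh) 0 * Jfun d0 delta Y N Khigh := by
  unfold score
  split_ifs with h
  · rw [min_eq_left h, max_eq_right (by linarith)]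
    ring
  · rw [min_eq_right (by linarith), max_eq_left (by linarith)]

theorem stmt15 (dlow dhigh d0 Khigh : ℝ)
    (hd0 : 0 < dlow) (hdd : dlow ≤ dhigh) (hd0' : 0 < d0) (hK : 0 < Khigh)
    (N : ℕ) (hN : 1 ≤ N) (delta Y : ℕ → ℝ)
    (hdval : ∀ n, 1 ≤ n → n ≤ N → delta n ∈ Set.Icc dlow dhigh)
    (hYval : ∀ n, 1 ≤ n → n ≤ N → Y n = 0 ∨ Y n = 1) :
    ∃! kappa : ℝ, 0 < kappa ∧ score d0 Khigh delta Y N kappa = 0 := by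
  have hd : ∀ n ∈ Finset.Icc 1 N, 0 < delta n := fun n hn => by
    rw [Finset.mem_Icc] at hn
    exact hd0.trans_le (hdval n hn.1 hn.2).1
  have hY : ∀ n ∈ Finset.Icc 1 N, 0 ≤ Y n ∧ Y n ≤ 1 := fun n hn => by
    rw [Finset.mem_Icc] at hn
    rcases hYval n hn.1 hn.2 with h | h <;> rw [h] <;> norm_num
  have hY1 : ∀ n ∈ Finset.Icc 1 N, Y n ≤ 1 := fun n hn => (hY n hn).2
  have hJ : 0 < Jfun d0 delta Y N Khigh := Jfun_pos hd0' hY1 hK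
  have hanti : StrictAntiOn (score d0 Khigh delta Y N) (Set.Ioi 0) := by
    intro a ha b _ hab
    rw [Set.mem_Ioi] at ha
    rw [score_eq, score_eq]
    rcases lt_or_ge a Khigh with h | h
    · have h1 := scoreBase_strictAnti (Y := Y) hd0' hd hY1 (lt_min ha hK)
        (show min a Khigh < min b Khigh by rw [min_eq_left h.le]; exact lt_min hab h)
      have h2 : max (a - Khigh) 0 ≤ max (b - Khigh) 0 :=
        max_le_max (by linarith) le_rfl
      linarith [mul_le_mul_of_nonneg_right h2 hJ.le]
    · rw [min_eq_right h, min_eq_right (h.trans hab.le), max_eq_left (by linarith),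
        max_eq_left (by linarith)]
      linarith [mul_lt_mul_of_pos_right (sub_lt_sub_right hab Khigh) hJ]
  have hcont : ContinuousOn (score d0 Khigh delta Y N) (Set.Ioi 0) := by
    rw [funext (score_eq d0 Khigh delta Y N)]
    refine ContinuousOn.sub ?_ (by fun_prop)
    exact (scoreBase_continuousOn hd0' hd).comp (by fun_prop) fun k hk => lt_min hk hK
  have hS : 0 ≤ ∑ n ∈ Finset.Icc 1 N, delta n * Y n :=
    Finset.sum_nonneg fun n hn => mul_nonneg (hd n hn).le (hY n hn).1
  set S := ∑ n ∈ Finset.Icc 1 N, delta n * Y n with hSdef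
  -- The left endpoint is at most `1 / (S + 2 d0 + 1)`, so `scoreBase_lower` gives a value `≥ 1`.
  obtain ⟨k₁, hk₁, hk₁K, hpos⟩ : ∃ k, 0 < k ∧ k ≤ Khigh ∧ 0 ≤ score d0 Khigh delta Y N k := by
    have hpos : 0 < 1 / (S + 2 * d0 + 1) := by positivity
    refine ⟨min Khigh (1 / (S + 2 * d0 + 1)), lt_min hK hpos, min_le_left _ _, ?_⟩
    have hle := min_le_right Khigh (1 / (S + 2 * d0 + 1))
    have hm := lt_min hK hpos
    have h1 := one_div_le_one_div_of_le hm hle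
    rw [one_div_one_div] at h1
    have h2 := scoreBase_lower (Y := Y) hd0' hd hY1 hm
    rw [score, if_pos (min_le_left _ _)]
    linarith
  -- The right endpoint is where the affine branch equals `g - |g| - 1` with `g = scoreBase Khigh`.
  obtain ⟨k₂, hk₂, hneg⟩ : ∃ k, Khigh < k ∧ score d0 Khigh delta Y N k ≤ 0 := by
    have h1 : 0 < (|scoreBase d0 delta Y N Khigh| + 1) / Jfun d0 delta Y N Khigh := by
      positivity
    refine ⟨Khigh + (|scoreBase d0 delta Y N Khigh| + 1) / Jfun d0 delta Y N Khigh,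
      by linarith, ?_⟩
    rw [score, if_neg (by linarith), add_sub_cancel_left, div_mul_cancel₀ _ hJ.ne']
    linarith [le_abs_self (scoreBase d0 delta Y N Khigh)]
  obtain ⟨k, hk, hk0⟩ := intermediate_value_Icc' (hk₁K.trans hk₂.le)
    (hcont.mono fun x hx => hk₁.trans_le hx.1) ⟨hneg, hpos⟩
  have hkpos : 0 < k := hk₁.trans_le hk.1
  exact ⟨k, ⟨hkpos, hk0⟩, fun y hy => hanti.injOn hy.1 hkpos (hy.2.trans hk0.symm)⟩
end

section
/- Assume K̲ < κ* < K̄, and for each N ≥ 1 let κ_N be the unique element of (0, ∞) with g_N(κ_N) = 0. Then there exist constants N₀, N₀′ ≥ 0 such that for every ε ∈ (0, 1], P( κ_N ∈ [K̲, K̄] for all N ≥ max( N₀ ln(2/ε), N₀′ / ln(2/ε) ) ) ≥ 1 − ε. -/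
/-!
The score is antitone in `κ` on `(0, K̄]`, and its linear continuation beyond `K̄` is nonincreasing.
Hence `κ_N < K̲` forces `g_N(K̲) ≤ 0`, and `κ_N > K̄` forces `g_N(K̄) ≥ 0`. At a fixed `K`, the
increments of `g_N(K)` are bounded, with conditional mean
`δ (e^{-Kδ} - e^{-κ*δ}) / (1 - e^{-Kδ})`, which is bounded away from zero, positive for `K = K̲`
and negative for `K = K̄`. An exponential supermartingale bound (`integral_exp_le`, `tail_le`)
makes each of the two bad events at time `N` have probability at most `A e^{-rN}`
(`score_tail`). Summing this geometric series over `N ≥ N₀ log (2/ε)` gives at most `ε`; since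
`log (2/ε) ≥ log 2`, the prefactor is absorbed by enlarging `N₀`, and `N₀' = 0` suffices.
-/

open MeasureTheory

/-- The odds `e^{-Kd} / (1 - e^{-Kd})` of an event of probability `e^{-Kd}`. -/
noncomputable def odds (K d : ℝ) : ℝ :=
  Real.exp (-(K * d)) / (1 - Real.exp (-(K * d)))

/-- The increment of the score at `K` contributed by an observation `y` at distance `d`. -/
noncomputable def incr (K d y : ℝ) : ℝ := -(d * y) + (1 - y) * d * odds K d

lemma one_sub_exp_pos {K d : ℝ} (hK : 0 < K) (hd : 0 < d) : 0 < 1 - Real.exp (-(K * d)) := by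
  have : Real.exp (-(K * d)) < 1 := Real.exp_lt_one_iff.2 (by nlinarith [mul_pos hK hd])
  linarith

lemma odds_nonneg {K d : ℝ} (hK : 0 < K) (hd : 0 < d) : 0 ≤ odds K d :=
  div_nonneg (Real.exp_pos _).le (one_sub_exp_pos hK hd).le

lemma odds_anti {K K' d d' : ℝ} (hK : 0 < K) (hd : 0 < d) (h : K ≤ K') (h' : d ≤ d') :
    odds K' d' ≤ odds K d := by
  have h1 : Real.exp (-(K' * d')) ≤ Real.exp (-(K * d)) :=
    Real.exp_le_exp.2 (neg_le_neg (mul_le_mul h h' hd.le (hK.le.trans h)))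
  exact div_le_div₀ (Real.exp_pos _).le h1 (one_sub_exp_pos hK hd) (by linarith)

lemma incr_anti {K K' d y : ℝ} (hK : 0 < K) (hd : 0 < d) (h : K ≤ K') (hy : y = 0 ∨ y = 1) :
    incr K' d y ≤ incr K d y := by
  have := mul_le_mul_of_nonneg_left (odds_anti hK hd h le_rfl) hd.le
  rcases hy with rfl | rfl <;> (simp [incr]; try linarith)

lemma abs_incr_le {K d y a b : ℝ} (hK : 0 < K) (ha : 0 < a) (hd : d ∈ Set.Icc a b)
    (hy : y = 0 ∨ y = 1) : |incr K d y| ≤ b * (1 + odds K a) := by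
  have hd0 : 0 < d := ha.trans_le hd.1
  have h1 := odds_nonneg hK ha
  have h2 := odds_nonneg hK hd0
  have h3 : odds K d ≤ odds K a := odds_anti hK ha le_rfl hd.1
  have hb : 0 < b := hd0.trans_le hd.2
  have h4 : d * odds K d ≤ b * odds K a := mul_le_mul hd.2 h3 h2 hb.le
  have h5 := mul_nonneg hd0.le h2
  have h6 := mul_nonneg hb.le h1
  have := hd.2
  rcases hy with rfl | rfl <;> simp only [incr] <;> rw [abs_le] <;> constructor <;> nlinarith

lemma exp_gap {a b d lo hi : ℝ} (hb : 0 < b) (hab : a < b) (hlo : 0 < lo)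
    (hd : d ∈ Set.Icc lo hi) :
    Real.exp (-(b * hi)) * ((b - a) * lo) ≤ Real.exp (-(a * d)) - Real.exp (-(b * d)) := by
  have e : Real.exp (-(a * d)) = Real.exp (-(b * d)) * Real.exp ((b - a) * d) := by
    rw [← Real.exp_add]; congr 1; ring
  have h1 : (b - a) * d + 1 ≤ Real.exp ((b - a) * d) := Real.add_one_le_exp _
  have h2 : Real.exp (-(b * hi)) ≤ Real.exp (-(b * d)) :=
    Real.exp_le_exp.2 (neg_le_neg (mul_le_mul_of_nonneg_left hd.2 hb.le))
  have h3 : (b - a) * lo ≤ (b - a) * d := mul_le_mul_of_nonneg_left hd.1 (by linarith)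
  have h4 : 0 ≤ (b - a) * lo := mul_nonneg (by linarith) hlo.le
  have h5 := mul_le_mul h2 h3 h4 (Real.exp_pos _).le
  rw [e]
  nlinarith [Real.exp_pos (-(b * d))]

/-- The conditional mean of the increment at `K` when the success probability is `e^{-kd}`. -/
lemma mean_eq {K d k : ℝ} (hK : 0 < K) (hd : 0 < d) :
    d * odds K d - d * (1 + odds K d) * Real.exp (-(k * d))
      = d * (Real.exp (-(K * d)) - Real.exp (-(k * d))) / (1 - Real.exp (-(K * d))) := by
  have := (one_sub_exp_pos hK hd).ne'
  unfold odds
  generalize Real.exp (-(K * d)) = p at *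
  field_simp
  ring

lemma le_scaled {K d lo g x : ℝ} (hK : 0 < K) (hlo : 0 < lo) (hd : lo ≤ d) (hg : 0 ≤ g)
    (hx : g ≤ x) : lo * g ≤ d * x / (1 - Real.exp (-(K * d))) := by
  have h1 := one_sub_exp_pos hK (hlo.trans_le hd)
  rw [le_div_iff₀ h1]
  have h2 : lo * g ≤ d * x := mul_le_mul hd hx hg (hlo.le.trans hd)
  have h3 : 0 ≤ lo * g := mul_nonneg hlo.le hg
  nlinarith [Real.exp_pos (-(K * d))]

/-- Exponential supermartingale bound for bounded adapted increments with conditional mean at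
least `c > 0`, at the parameter `c / (2 B²)`. -/
lemma integral_exp_le {Ω : Type*} {m0 : MeasurableSpace Ω} (P : Measure Ω)
    [IsProbabilityMeasure P] (F : Filtration ℕ m0) (X : ℕ → Ω → ℝ) (B c : ℝ)
    (hc : 0 < c) (hcB : c ≤ B)
    (hmeas : ∀ n, 1 ≤ n → Measurable[F n] (X n))
    (hbd : ∀ n, 1 ≤ n → ∀ ω, |X n ω| ≤ B)
    (hmean : ∀ n, 1 ≤ n → ∀ᵐ ω ∂P, c ≤ (P[X n|F (n - 1)]) ω) (N : ℕ) :
    ∫ ω, Real.exp (-(c / (2 * B ^ 2)) * ∑ n ∈ Finset.Icc 1 N, X n ω) ∂P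
      ≤ Real.exp (-(c ^ 2 / (4 * B ^ 2)) * N) := by
  have hB : 0 < B := hc.trans_le hcB
  set l : ℝ := c / (2 * B ^ 2) with hl
  have hl0 : 0 < l := by positivity
  have hlB : l * B ≤ 1 := by
    rw [hl, div_mul_eq_mul_div, div_le_one (by positivity)]; nlinarith
  have hSmeas : ∀ N, Measurable[F N] (fun ω => ∑ n ∈ Finset.Icc 1 N, X n ω) := by
    intro N
    refine Finset.measurable_sum _ fun n hn => ?_
    rw [Finset.mem_Icc] at hn
    exact (hmeas n hn.1).mono (F.mono hn.2) le_rfl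
  have hWmeas : ∀ N, Measurable[F N]
      (fun ω => Real.exp (-l * ∑ n ∈ Finset.Icc 1 N, X n ω)) := fun N =>
    Real.measurable_exp.comp ((hSmeas N).const_mul (-l))
  have hWint : ∀ N, Integrable (fun ω => Real.exp (-l * ∑ n ∈ Finset.Icc 1 N, X n ω)) P := by
    intro N
    refine Integrable.of_bound ((hWmeas N).mono (F.le N) le_rfl).aestronglyMeasurable
      (Real.exp (l * (N * B))) (Filter.Eventually.of_forall fun ω => ?_)
    rw [Real.norm_eq_abs, Real.abs_exp, Real.exp_le_exp]
    have : |∑ n ∈ Finset.Icc 1 N, X n ω| ≤ N * B := by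
      refine (Finset.abs_sum_le_sum_abs _ _).trans ?_
      refine (Finset.sum_le_card_nsmul _ _ B fun n hn =>
        hbd n (Finset.mem_Icc.1 hn).1 ω).trans ?_
      simp
    have h2 := (abs_le.1 this).1
    nlinarith
  induction N with
  | zero => simp
  | succ N ih =>
    have hX := hbd (N + 1) (by omega)
    have hXm : Measurable (X (N + 1)) := (hmeas (N + 1) (by omega)).mono (F.le _) le_rfl
    have hXint : Integrable (X (N + 1)) P :=
      Integrable.of_bound hXm.aestronglyMeasurable B (Filter.Eventually.of_forall hX)
    set W : Ω → ℝ := fun ω => Real.exp (-l * ∑ n ∈ Finset.Icc 1 N, X n ω) with hW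
    have hWpos : ∀ ω, 0 < W ω := fun ω => Real.exp_pos _
    have hWX : Integrable (fun ω => W ω * X (N + 1) ω) P :=
      (hWint N).mul_bdd (c := B) hXm.aestronglyMeasurable (Filter.Eventually.of_forall hX)
    have hlow : c * ∫ ω, W ω ∂P ≤ ∫ ω, W ω * X (N + 1) ω ∂P := by
      have hpull : P[fun ω => W ω * X (N + 1) ω|F N]
          =ᵐ[P] fun ω => W ω * (P[X (N + 1)|F N]) ω :=
        condExp_mul_of_stronglyMeasurable_left (hWmeas N).stronglyMeasurable hWX hXint
      rw [← integral_condExp (F.le N) (f := fun ω => W ω * X (N + 1) ω), ← integral_const_mul]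
      refine integral_mono_ae ((hWint N).const_mul c) integrable_condExp ?_
      filter_upwards [hpull, hmean (N + 1) (by omega)] with ω h1 h2
      rw [h1, mul_comm]
      exact mul_le_mul_of_nonneg_left h2 (hWpos ω).le
    have hstep : ∫ ω, Real.exp (-l * ∑ n ∈ Finset.Icc 1 (N + 1), X n ω) ∂P
        ≤ ∫ ω, ((1 + l ^ 2 * B ^ 2) * W ω - l * (W ω * X (N + 1) ω)) ∂P := by
      refine integral_mono (hWint (N + 1))
        (((hWint N).const_mul _).sub (hWX.const_mul l)) fun ω => ?_
      have e : Real.exp (-l * ∑ n ∈ Finset.Icc 1 (N + 1), X n ω)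
          = W ω * Real.exp (-(l * X (N + 1) ω)) := by
        rw [Finset.sum_Icc_succ_top (by omega), hW, ← Real.exp_add]; congr 1; ring
      have ht : |-(l * X (N + 1) ω)| ≤ 1 := by
        rw [abs_neg, abs_mul, abs_of_pos hl0]
        exact (mul_le_mul_of_nonneg_left (hX ω) hl0.le).trans hlB
      have h1 := (abs_le.1 (Real.abs_exp_sub_one_sub_id_le ht)).2
      have h2 : (X (N + 1) ω) ^ 2 ≤ B ^ 2 := sq_le_sq' (abs_le.1 (hX ω)).1 (abs_le.1 (hX ω)).2
      have h3 : l ^ 2 * (X (N + 1) ω) ^ 2 ≤ l ^ 2 * B ^ 2 :=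
        mul_le_mul_of_nonneg_left h2 (sq_nonneg l)
      have h4 : Real.exp (-(l * X (N + 1) ω)) ≤ 1 + l ^ 2 * B ^ 2 - l * X (N + 1) ω := by
        nlinarith
      change Real.exp (-l * ∑ n ∈ Finset.Icc 1 (N + 1), X n ω) ≤ _
      rw [e]
      have := mul_le_mul_of_nonneg_left h4 (hWpos ω).le
      linarith
    rw [integral_sub ((hWint N).const_mul _) (hWX.const_mul l), integral_const_mul,
      integral_const_mul] at hstep
    have hW0 : 0 ≤ ∫ ω, W ω ∂P := integral_nonneg fun ω => (hWpos ω).le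
    -- `l = c / (2 B²)` minimises `l² B² - l c`, with value `-c² / (4 B²)`.
    have hfac : 1 + l ^ 2 * B ^ 2 - l * c ≤ Real.exp (-(c ^ 2 / (4 * B ^ 2))) := by
      have e : l ^ 2 * B ^ 2 - l * c = -(c ^ 2 / (4 * B ^ 2)) := by
        rw [hl]; field_simp; ring
      have := Real.add_one_le_exp (-(c ^ 2 / (4 * B ^ 2)))
      linarith
    calc _ ≤ (1 + l ^ 2 * B ^ 2 - l * c) * ∫ ω, W ω ∂P := by nlinarith
      _ ≤ Real.exp (-(c ^ 2 / (4 * B ^ 2))) * Real.exp (-(c ^ 2 / (4 * B ^ 2)) * N) :=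
          mul_le_mul hfac ih hW0 (Real.exp_pos _).le
      _ = _ := by rw [← Real.exp_add]; congr 1; push_cast; ring

lemma tail_le {Ω : Type*} {m0 : MeasurableSpace Ω} (P : Measure Ω)
    [IsProbabilityMeasure P] (F : Filtration ℕ m0) (X : ℕ → Ω → ℝ) (B c C : ℝ)
    (hc : 0 < c)
    (hmeas : ∀ n, 1 ≤ n → Measurable[F n] (X n))
    (hbd : ∀ n, 1 ≤ n → ∀ ω, |X n ω| ≤ B)
    (hmean : ∀ n, 1 ≤ n → ∀ᵐ ω ∂P, c ≤ (P[X n|F (n - 1)]) ω) :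
    ∃ A : ℝ, 0 < A ∧ ∃ r : ℝ, 0 < r ∧ ∀ N : ℕ,
      P {ω | ∑ n ∈ Finset.Icc 1 N, X n ω ≤ C} ≤ ENNReal.ofReal (A * Real.exp (-(r * N))) := by
  set B' := max B c with hB'
  have hB0 : 0 < B' := hc.trans_le (le_max_right _ _)
  set l : ℝ := c / (2 * B' ^ 2) with hl
  have hl0 : 0 < l := by positivity
  refine ⟨Real.exp (l * C), Real.exp_pos _, c ^ 2 / (4 * B' ^ 2), by positivity, fun N => ?_⟩
  have hE := integral_exp_le P F X B' c hc (le_max_right _ _) hmeas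
    (fun n hn ω => (hbd n hn ω).trans (le_max_left _ _)) hmean N
  rw [← hl] at hE
  set S : Ω → ℝ := fun ω => ∑ n ∈ Finset.Icc 1 N, X n ω with hS
  have hSm : Measurable S := by
    refine Finset.measurable_sum _ fun n hn => ?_
    exact (hmeas n (Finset.mem_Icc.1 hn).1).mono (F.le _) le_rfl
  have hint : Integrable (fun ω => Real.exp (-l * S ω)) P := by
    refine Integrable.of_bound (by fun_prop) (Real.exp (l * (N * B)))
      (Filter.Eventually.of_forall fun ω => ?_)
    rw [Real.norm_eq_abs, Real.abs_exp, Real.exp_le_exp]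
    have : |S ω| ≤ N * B := by
      refine (Finset.abs_sum_le_sum_abs _ _).trans ?_
      refine (Finset.sum_le_card_nsmul _ _ B fun n hn =>
        hbd n (Finset.mem_Icc.1 hn).1 ω).trans ?_
      simp
    have h2 := (abs_le.1 this).1
    nlinarith
  have hch := ProbabilityTheory.measure_le_le_exp_mul_mgf (μ := P) (X := S) (t := -l) C
    (by linarith) hint
  have : P {ω | S ω ≤ C} = ENNReal.ofReal (P.real {ω | S ω ≤ C}) := by
    rw [ofReal_measureReal]
  rw [this]
  refine ENNReal.ofReal_le_ofReal (hch.trans ?_)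
  rw [neg_neg, ← neg_mul]
  exact mul_le_mul_of_nonneg_left hE (Real.exp_pos _).le

/-- Exponential tail of the signed score sum at `K`, for a sign `s` that makes the conditional
mean of the increments uniformly positive. -/
lemma score_tail {Ω : Type*} {m0 : MeasurableSpace Ω} (P : Measure Ω)
    [IsProbabilityMeasure P] (F : Filtration ℕ m0)
    (kstar dlow dhigh K s c C : ℝ) (hd0 : 0 < dlow) (hK : 0 < K) (hs : |s| = 1) (hc : 0 < c)
    (delta Y : ℕ → Ω → ℝ)
    (hdmeas : ∀ n, 1 ≤ n → Measurable[F (n - 1)] (delta n))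
    (hdval : ∀ n, 1 ≤ n → ∀ ω, delta n ω ∈ Set.Icc dlow dhigh)
    (hYmeas : ∀ n, 1 ≤ n → Measurable[F n] (Y n))
    (hYval : ∀ n ω, Y n ω = 0 ∨ Y n ω = 1)
    (hcond : ∀ n, 1 ≤ n →
      P[Y n|F (n - 1)] =ᵐ[P] fun ω => Real.exp (-(kstar * delta n ω)))
    (hmean : ∀ d ∈ Set.Icc dlow dhigh,
      c ≤ s * (d * odds K d - d * (1 + odds K d) * Real.exp (-(kstar * d)))) :
    ∃ A : ℝ, 0 < A ∧ ∃ r : ℝ, 0 < r ∧ ∀ N : ℕ,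
      P {ω | s * ∑ n ∈ Finset.Icc 1 N, incr K (delta n ω) (Y n ω) ≤ C}
        ≤ ENNReal.ofReal (A * Real.exp (-(r * N))) := by
  simp_rw [Finset.mul_sum]
  have hodds : Measurable (odds K) := by unfold odds; fun_prop
  have hdF : ∀ n, 1 ≤ n → Measurable[F n] (delta n) := fun n hn =>
    (hdmeas n hn).mono (F.mono (Nat.sub_le n 1)) le_rfl
  have hXmeas : ∀ n, 1 ≤ n → Measurable[F n] (fun ω => s * incr K (delta n ω) (Y n ω)) := by
    intro n hn
    have h1 := hdF n hn
    have h2 := hYmeas n hn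
    have h3 := hodds.comp h1
    unfold incr
    exact (((h1.mul h2).neg).add (((h2.const_sub 1).mul h1).mul h3)).const_mul s
  have hbd : ∀ n, 1 ≤ n → ∀ ω,
      |s * incr K (delta n ω) (Y n ω)| ≤ dhigh * (1 + odds K dlow) := by
    intro n hn ω
    rw [abs_mul, hs, one_mul]
    exact abs_incr_le hK hd0 (hdval n hn ω) (hYval n ω)
  refine tail_le P F (fun n ω => s * incr K (delta n ω) (Y n ω))
    (dhigh * (1 + odds K dlow)) c C hc hXmeas hbd fun n hn => ?_
  -- The increment is affine in `Y n` with `F (n - 1)`-measurable coefficients `a` and `b`.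
  set a : Ω → ℝ := fun ω => s * (delta n ω * odds K (delta n ω)) with ha
  set b : Ω → ℝ := fun ω => -(s * (delta n ω * (1 + odds K (delta n ω)))) with hb
  have hdm := hdmeas n hn
  have hom := hodds.comp hdm
  have ham : Measurable[F (n - 1)] a := (hdm.mul hom).const_mul s
  have hbm : Measurable[F (n - 1)] b := ((hdm.mul (hom.const_add 1)).const_mul s).neg
  have hYint : Integrable (Y n) P := by
    refine Integrable.of_bound ((hYmeas n hn).mono (F.le _) le_rfl).aestronglyMeasurable 1
      (Filter.Eventually.of_forall fun ω => ?_)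
    rcases hYval n ω with h | h <;> simp [h]
  have hXint : Integrable (fun ω => s * incr K (delta n ω) (Y n ω)) P :=
    Integrable.of_bound ((hXmeas n hn).mono (F.le _) le_rfl).aestronglyMeasurable _
      (Filter.Eventually.of_forall (hbd n hn))
  have haint : Integrable a P := by
    refine Integrable.of_bound (ham.mono (F.le _) le_rfl).aestronglyMeasurable
      (dhigh * (1 + odds K dlow)) (Filter.Eventually.of_forall fun ω => ?_)
    have := abs_incr_le (y := 0) hK hd0 (hdval n hn ω) (Or.inl rfl)
    simpa [ha, incr, abs_mul, hs] using this
  have hXeq : (fun ω => s * incr K (delta n ω) (Y n ω)) = a + b * Y n := by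
    funext ω; simp only [incr, ha, hb, Pi.add_apply, Pi.mul_apply]; ring
  have hbYint : Integrable (b * Y n) P := by
    have e : b * Y n = (fun ω => s * incr K (delta n ω) (Y n ω)) - a := by rw [hXeq]; simp
    rw [e]; exact hXint.sub haint
  have h1 := condExp_add haint hbYint (F (n - 1))
  have h2 := condExp_of_stronglyMeasurable (F.le (n - 1)) ham.stronglyMeasurable haint
  have h3 := condExp_mul_of_stronglyMeasurable_left hbm.stronglyMeasurable hbYint hYint
  change ∀ᵐ ω ∂P, c ≤ (P[fun ω => s * incr K (delta n ω) (Y n ω)|F (n - 1)]) ω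
  rw [hXeq]
  filter_upwards [h1, h3, hcond n hn] with ω e1 e3 e4
  rw [e1, Pi.add_apply, h2, e3, Pi.mul_apply, e4]
  refine (hmean _ (hdval n hn ω)).trans (le_of_eq ?_)
  simp only [ha, hb]; ring

lemma scoreBase_eq (d0 : ℝ) (delta Y : ℕ → ℝ) (N : ℕ) (K : ℝ) :
    scoreBase d0 delta Y N K
      = ∑ n ∈ Finset.Icc 1 N, incr K (delta n) (Y n) + (-d0 + d0 * odds K d0) := by
  unfold scoreBase incr odds; ring

lemma Jfun_nonneg (d0 : ℝ) (delta Y : ℕ → ℝ) (N : ℕ) (K : ℝ) (hY : ∀ n, Y n = 0 ∨ Y n = 1) :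
    0 ≤ Jfun d0 delta Y N K := by
  unfold Jfun
  have : ∀ n, 0 ≤ 1 - Y n := fun n => by rcases hY n with h | h <;> simp [h]
  refine add_nonneg (Finset.sum_nonneg fun n _ => ?_) (by positivity)
  exact mul_nonneg (mul_nonneg (this n) (sq_nonneg _)) (by positivity)

/-- Union bound over all times after `N₀ log (2/ε)` for events of geometrically decaying
probability. -/
lemma union_tail {Ω : Type*} {m0 : MeasurableSpace Ω} (P : Measure Ω) (bad : ℕ → Set Ω)
    (A r : ℝ) (hA : 0 < A) (hr : 0 < r)
    (h : ∀ N : ℕ, P (bad N) ≤ ENNReal.ofReal (A * Real.exp (-(r * N)))) :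
    ∃ N0 : ℝ, 0 ≤ N0 ∧ ∀ ε : ℝ, ε ∈ Set.Ioc (0 : ℝ) 1 →
      P {ω | ∃ N : ℕ, N0 * Real.log (2 / ε) ≤ N ∧ ω ∈ bad N} ≤ ENNReal.ofReal ε := by
  have hq : Real.exp (-r) < 1 := Real.exp_lt_one_iff.2 (by linarith)
  have hq1 : 0 < 1 - Real.exp (-r) := by linarith
  set G := A / (1 - Real.exp (-r)) with hG
  have hG0 : 0 < G := div_pos hA hq1
  have hl2 : 0 < Real.log 2 := Real.log_pos one_lt_two
  set u := max 0 (Real.log G) with hu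
  have hu0 : 0 ≤ u := le_max_left _ _
  refine ⟨(1 + u / Real.log 2) / r, by positivity, fun ε hε => ?_⟩
  set L := Real.log (2 / ε) with hL
  have hL2 : Real.log 2 ≤ L := by
    apply Real.log_le_log two_pos
    rw [le_div_iff₀ hε.1]; linarith [hε.2]
  set M := ⌈(1 + u / Real.log 2) / r * L⌉₊ with hM
  have hsub : {ω | ∃ N : ℕ, (1 + u / Real.log 2) / r * L ≤ N ∧ ω ∈ bad N}
      ⊆ ⋃ j : ℕ, bad (M + j) := by
    rintro ω ⟨N, hN, hω⟩
    have : M ≤ N := Nat.ceil_le.2 hN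
    exact Set.mem_iUnion.2 ⟨N - M, by rwa [Nat.add_sub_cancel' this]⟩
  have hgeo : HasSum (fun j : ℕ => A * Real.exp (-(r * M)) * Real.exp (-r) ^ j)
      (A * Real.exp (-(r * M)) * (1 - Real.exp (-r))⁻¹) :=
    (hasSum_geometric_of_lt_one (Real.exp_pos _).le hq).mul_left _
  calc _ ≤ P (⋃ j : ℕ, bad (M + j)) := measure_mono hsub
    _ ≤ ∑' j : ℕ, P (bad (M + j)) := measure_iUnion_le _
    _ ≤ ∑' j : ℕ, ENNReal.ofReal (A * Real.exp (-(r * M)) * Real.exp (-r) ^ j) := by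
        refine ENNReal.tsum_le_tsum fun j => (h (M + j)).trans (le_of_eq ?_)
        rw [← Real.exp_nat_mul, mul_assoc, ← Real.exp_add]
        congr 3; push_cast; ring
    _ = ENNReal.ofReal (A * Real.exp (-(r * M)) * (1 - Real.exp (-r))⁻¹) := by
        rw [← ENNReal.ofReal_tsum_of_nonneg (fun j => by positivity) hgeo.summable,
          hgeo.tsum_eq]
    _ ≤ ENNReal.ofReal ε := by
        apply ENNReal.ofReal_le_ofReal
        have h1 : L + Real.log G ≤ r * M := by
          have hc : (1 + u / Real.log 2) / r * L ≤ M := Nat.le_ceil _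
          have h2 : r * ((1 + u / Real.log 2) / r * L) ≤ r * M :=
            mul_le_mul_of_nonneg_left hc hr.le
          have h3 : r * ((1 + u / Real.log 2) / r * L) = L + u / Real.log 2 * L := by
            field_simp
          have h4 : u / Real.log 2 * Real.log 2 ≤ u / Real.log 2 * L :=
            mul_le_mul_of_nonneg_left hL2 (by positivity)
          rw [div_mul_cancel₀ _ hl2.ne'] at h4
          have := le_max_right 0 (Real.log G)
          linarith
        have h5 : Real.exp (-(r * M)) ≤ ε / 2 * G⁻¹ := by
          calc Real.exp (-(r * M)) ≤ Real.exp (-L + -Real.log G) :=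
                Real.exp_le_exp.2 (by linarith)
            _ = ε / 2 * G⁻¹ := by
                have := hε.1
                rw [Real.exp_add, Real.exp_neg, Real.exp_neg, Real.exp_log hG0, hL,
                  Real.exp_log (by positivity), inv_div]
        calc A * Real.exp (-(r * M)) * (1 - Real.exp (-r))⁻¹ = G * Real.exp (-(r * M)) := by
              rw [hG]; ring
          _ ≤ G * (ε / 2 * G⁻¹) := mul_le_mul_of_nonneg_left h5 hG0.le
          _ = ε / 2 := by field_simp
          _ ≤ ε := by linarith [hε.1]

theorem stmt19 {Ω : Type*} [m0 : MeasurableSpace Ω] (P : Measure Ω)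
    [IsProbabilityMeasure P] (F : Filtration ℕ m0)
    (kstar dlow dhigh d0 Klow Khigh : ℝ)
    (hk : 0 < kstar) (hd0 : 0 < dlow) (hdd : dlow ≤ dhigh) (hd0' : 0 < d0)
    (hK : 0 < Klow) (hKK : Klow < Khigh)
    (hkl : Klow < kstar) (hkh : kstar < Khigh)
    (delta : ℕ → Ω → ℝ) (Y : ℕ → Ω → ℝ)
    (hdmeas : ∀ n, 1 ≤ n → Measurable[F (n - 1)] (delta n))
    (hdval : ∀ n, 1 ≤ n → ∀ ω, delta n ω ∈ Set.Icc dlow dhigh)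
    (hYmeas : ∀ n, 1 ≤ n → Measurable[F n] (Y n))
    (hYval : ∀ n ω, Y n ω = 0 ∨ Y n ω = 1)
    (hcond : ∀ n, 1 ≤ n →
      P[Y n|F (n - 1)] =ᵐ[P] fun ω => Real.exp (-(kstar * delta n ω)))
    -- κ_N is the unique positive root of the regularised score g_N
    (kappaN : ℕ → Ω → ℝ)
    (hpos : ∀ N, 1 ≤ N → ∀ ω, 0 < kappaN N ω)
    (hroot : ∀ N, 1 ≤ N → ∀ ω,
      score d0 Khigh (fun n => delta n ω) (fun n => Y n ω) N (kappaN N ω) = 0)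
    (huniq : ∀ N, 1 ≤ N → ∀ ω, ∀ kappa : ℝ, 0 < kappa →
      score d0 Khigh (fun n => delta n ω) (fun n => Y n ω) N kappa = 0 →
      kappa = kappaN N ω) :
    ∃ N0 : ℝ, 0 ≤ N0 ∧ ∃ N0' : ℝ, 0 ≤ N0' ∧
      ∀ ε : ℝ, ε ∈ Set.Ioc (0 : ℝ) 1 →
        ENNReal.ofReal (1 - ε) ≤
          P {ω | ∀ N : ℕ, 1 ≤ N →
                max (N0 * Real.log (2 / ε)) (N0' / Real.log (2 / ε)) ≤ (N : ℝ) →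
                kappaN N ω ∈ Set.Icc Klow Khigh} := by
  set Dl := -d0 + d0 * odds Klow d0 with hDl
  set Dh := -d0 + d0 * odds Khigh d0 with hDh
  have hKh : 0 < Khigh := hK.trans hKK
  obtain ⟨A1, hA1, r1, hr1, hb1⟩ := score_tail P F kstar dlow dhigh Klow 1
    (dlow * (Real.exp (-(kstar * dhigh)) * ((kstar - Klow) * dlow))) (-Dl) hd0 hK (by simp)
    (by have := sub_pos.2 hkl; positivity) delta Y hdmeas hdval hYmeas hYval hcond (by
      intro d hd
      rw [mean_eq hK (hd0.trans_le hd.1), one_mul]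
      have := sub_pos.2 hkl
      exact le_scaled hK hd0 hd.1 (by positivity) (exp_gap hk hkl hd0 hd))
  obtain ⟨A2, hA2, r2, hr2, hb2⟩ := score_tail P F kstar dlow dhigh Khigh (-1)
    (dlow * (Real.exp (-(Khigh * dhigh)) * ((Khigh - kstar) * dlow))) Dh hd0 hKh (by simp)
    (by have := sub_pos.2 hkh; positivity) delta Y hdmeas hdval hYmeas hYval hcond (by
      intro d hd
      rw [mean_eq hKh (hd0.trans_le hd.1)]
      have := sub_pos.2 hkh
      refine (le_scaled hKh hd0 hd.1 (by positivity) (exp_gap hKh hkh hd0 hd)).trans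
        (le_of_eq ?_)
      ring)
  set bad : ℕ → Set Ω := fun N =>
    {ω | 1 * ∑ n ∈ Finset.Icc 1 N, incr Klow (delta n ω) (Y n ω) ≤ -Dl} ∪
    {ω | -1 * ∑ n ∈ Finset.Icc 1 N, incr Khigh (delta n ω) (Y n ω) ≤ Dh} with hbad
  have hbadP : ∀ N : ℕ, P (bad N)
      ≤ ENNReal.ofReal ((A1 + A2) * Real.exp (-(min r1 r2 * N))) := by
    intro N
    refine (measure_union_le _ _).trans ((add_le_add (hb1 N) (hb2 N)).trans ?_)
    rw [← ENNReal.ofReal_add (by positivity) (by positivity), add_mul]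
    gcongr
    · exact min_le_left _ _
    · exact min_le_right _ _
  obtain ⟨N0, hN0, hmain⟩ := union_tail P bad (A1 + A2) (min r1 r2) (by positivity)
    (lt_min hr1 hr2) hbadP
  refine ⟨N0, hN0, 0, le_rfl, fun ε hε => ?_⟩
  set good := {ω | ∀ N : ℕ, 1 ≤ N →
    max (N0 * Real.log (2 / ε)) (0 / Real.log (2 / ε)) ≤ (N : ℝ) →
    kappaN N ω ∈ Set.Icc Klow Khigh} with hgood
  have hsub : goodᶜ ⊆ {ω | ∃ N : ℕ, N0 * Real.log (2 / ε) ≤ N ∧ ω ∈ bad N} := by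
    intro ω hω
    simp only [hgood, Set.mem_compl_iff, Set.mem_ofPred_eq, not_forall] at hω
    obtain ⟨N, hN1, hN, hout⟩ := hω
    refine ⟨N, (le_max_left _ _).trans hN, ?_⟩
    have hr := hroot N hN1 ω
    have hp := hpos N hN1 ω
    rw [Set.mem_Icc, not_and_or, not_le, not_le] at hout
    rcases hout with hlt | hgt
    · left
      rw [score, if_pos (hlt.le.trans hKK.le), scoreBase_eq] at hr
      have h1 : ∑ n ∈ Finset.Icc 1 N, incr Klow (delta n ω) (Y n ω)
          ≤ ∑ n ∈ Finset.Icc 1 N, incr (kappaN N ω) (delta n ω) (Y n ω) :=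
        Finset.sum_le_sum fun n hn => incr_anti hp
          (hd0.trans_le (hdval n (Finset.mem_Icc.1 hn).1 ω).1) hlt.le (hYval n ω)
      have h2 := mul_le_mul_of_nonneg_left (odds_anti hp hd0' hlt.le le_rfl) hd0'.le
      change 1 * _ ≤ -Dl
      linarith
    · right
      rw [score, if_neg (not_le.2 hgt), scoreBase_eq] at hr
      have h1 := mul_nonneg (sub_pos.2 hgt).le
        (Jfun_nonneg d0 (fun n => delta n ω) (fun n => Y n ω) N Khigh fun n => hYval n ω)
      change -1 * _ ≤ Dh
      linarith
  -- `kappaN` need not be measurable, so only subadditivity of the outer measure is available.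
  have hone : 1 ≤ P good + ENNReal.ofReal ε := by
    calc (1 : ENNReal) = P (good ∪ goodᶜ) := by rw [Set.union_compl_self, measure_univ]
      _ ≤ P good + P goodᶜ := measure_union_le _ _
      _ ≤ _ := by gcongr; exact (measure_mono hsub).trans (hmain ε hε)
  rw [ENNReal.ofReal_sub _ hε.1.le, ENNReal.ofReal_one]
  exact tsub_le_iff_right.2 hone
end
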